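/- Let 0 < K < 1/3 and let α ∈ (0,1) satisfy (1−K)α > 2/3. Then for every δ > 0 there exist ε > 0 and C > 0 such that the following holds: if (v,L) is a smooth solution of the expansion-normalized Euler system on [1,∞) × ℝ, 2π-periodic in x, whose initial data at t = 1 satisfy |v̄(1)| + ‖(v(1,·), L(1,·))‖₍₂₎ < ε, then ‖(v(t,·), L(t,·))‖₍₂₎ ≤ C · t^(−α(1−3K)/2 + δ) for all t ≥ 1. -/

import Mathlib

open MeasureTheory

/-- Partial derivative in the time variable of a function of `(t, x)`. -/
noncomputable def pderivT (f : ℝ → ℝ → ℝ) (t x : ℝ) : ℝ := deriv (fun s => f s x) t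

/-- Partial derivative in the space variable of a function of `(t, x)`. -/
noncomputable def pderivX (f : ℝ → ℝ → ℝ) (t x : ℝ) : ℝ := deriv (fun y => f t y) x

/-- The `L²` norm of a function over one period `[0, 2π]`. -/
noncomputable def L2normCirc (g : ℝ → ℝ) : ℝ :=
  Real.sqrt (∫ x in (0:ℝ)..(2 * Real.pi), (g x) ^ 2)

/-- The norm `‖(v,L)‖₍₂₎ = ‖∂ₓv‖_{L²} + ‖∂ₓ²v‖_{L²} + ‖∂ₓL‖_{L²} + ‖∂ₓ²L‖_{L²}`
at time `t`. -/
noncomputable def sobolevNorm2 (v L : ℝ → ℝ → ℝ) (t : ℝ) : ℝ :=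
  L2normCirc (fun x => deriv (v t) x) + L2normCirc (fun x => deriv (deriv (v t)) x)
    + L2normCirc (fun x => deriv (L t) x) + L2normCirc (fun x => deriv (deriv (L t)) x)

/-- The mean velocity `v̄(t) = ∫₀^{2π} v(t,x) dx`. -/
noncomputable def meanVel (v : ℝ → ℝ → ℝ) (t : ℝ) : ℝ :=
  ∫ x in (0:ℝ)..(2 * Real.pi), v t x

/-- The expansion-normalized relativistic Euler system on `[1,∞) × ℝ` with expansion
exponent `α` and (squared) sound speed `K`. -/
def IsEulerSolution (α K : ℝ) (v L : ℝ → ℝ → ℝ) : Prop :=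
  ∀ t, 1 ≤ t → ∀ x : ℝ,
    (pderivT v t x =
      -(α * (1 - 3 * K) / t) * v t x
      - t ^ (-α) * ((1 - K) / (1 - K * (v t x) ^ 2)) * v t x * pderivX v t x
      - t ^ (-α) * (K / (1 + K)) * ((1 - (v t x) ^ 2) ^ 2 / (1 - K * (v t x) ^ 2))
          * pderivX L t x
      + α * (1 - K) * (1 - 3 * K) * (t ^ (-α) / (1 - K * (v t x) ^ 2)) * (v t x) ^ 3)
    ∧ (pderivT L t x =
      -((1 + K) / (1 - K * (v t x) ^ 2)) * t ^ (-α) * pderivX v t x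
      - ((1 - K) / (1 - K * (v t x) ^ 2)) * t ^ (-α) * v t x * pderivX L t x
      + α * (1 + K) * (1 - 3 * K) * (t ^ (-α) / (1 - K * (v t x) ^ 2)) * (v t x) ^ 2)


/-- Smoothness on the closed half plane. -/
def SmH (F : ℝ → ℝ → ℝ) : Prop :=
  ContDiffOn ℝ (⊤ : ℕ∞) (fun p : ℝ × ℝ => F p.1 p.2) (Set.Ici 1 ×ˢ Set.univ)

lemma uniqueDiffH : UniqueDiffOn ℝ ((Set.Ici (1:ℝ)) ×ˢ (Set.univ : Set ℝ)) :=
  (uniqueDiffOn_Ici 1).prod uniqueDiffOn_univ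

lemma SmH.hasDerivX_aux {F : ℝ → ℝ → ℝ} (hF : SmH F) {t : ℝ} (ht : 1 ≤ t) (x : ℝ) :
    HasDerivAt (F t) (fderivWithin ℝ (fun p : ℝ × ℝ => F p.1 p.2)
      (Set.Ici 1 ×ˢ Set.univ) (t, x) (0, 1)) x := by
  have h1 : DifferentiableWithinAt ℝ (fun p : ℝ × ℝ => F p.1 p.2)
      (Set.Ici 1 ×ˢ Set.univ) (t, x) :=
    hF.differentiableOn (by simp) (t, x) ⟨ht, trivial⟩
  have h2 : HasDerivWithinAt (fun y : ℝ => (t, y)) ((0:ℝ), (1:ℝ)) Set.univ x :=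
    ((hasDerivAt_const x t).prodMk (hasDerivAt_id x)).hasDerivWithinAt
  have h3 := h1.hasFDerivWithinAt.comp_hasDerivWithinAt x h2 (fun y _ => ⟨ht, trivial⟩)
  rw [hasDerivWithinAt_univ] at h3
  exact h3

lemma SmH.hasDerivX {F : ℝ → ℝ → ℝ} (hF : SmH F) {t : ℝ} (ht : 1 ≤ t) (x : ℝ) :
    HasDerivAt (F t) (pderivX F t x) x :=
  (hF.hasDerivX_aux ht x).differentiableAt.hasDerivAt

lemma SmH.pderivX_eq {F : ℝ → ℝ → ℝ} (hF : SmH F) {t : ℝ} (ht : 1 ≤ t) (x : ℝ) :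
    pderivX F t x = fderivWithin ℝ (fun p : ℝ × ℝ => F p.1 p.2)
      (Set.Ici 1 ×ˢ Set.univ) (t, x) (0, 1) :=
  (hF.hasDerivX_aux ht x).deriv

lemma SmH.dX {F : ℝ → ℝ → ℝ} (hF : SmH F) : SmH (pderivX F) := by
  have h := ContDiffOn.fderivWithin (m := ((⊤ : ℕ∞) : WithTop ℕ∞)) hF uniqueDiffH (by simp)
  have h2 := h.clm_apply (contDiffOn_const (c := ((0:ℝ), (1:ℝ))))
  refine h2.congr ?_
  rintro ⟨t, x⟩ ⟨ht, -⟩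
  exact hF.pderivX_eq ht x

lemma SmH.contDiffAt {F : ℝ → ℝ → ℝ} (hF : SmH F) {t : ℝ} (ht : 1 < t) (x : ℝ) :
    ContDiffAt ℝ (⊤ : ℕ∞) (fun p : ℝ × ℝ => F p.1 p.2) (t, x) := by
  refine ContDiffOn.contDiffAt hF ?_
  exact prod_mem_nhds (Ici_mem_nhds ht) Filter.univ_mem

lemma SmH.hasDerivT_aux {F : ℝ → ℝ → ℝ} (hF : SmH F) {t : ℝ} (ht : 1 < t) (x : ℝ) :
    HasDerivAt (fun s => F s x) (fderiv ℝ (fun p : ℝ × ℝ => F p.1 p.2) (t, x) (1, 0)) t := by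
  have h1 := ((hF.contDiffAt ht x).differentiableAt (by simp)).hasFDerivAt
  have h2 : HasDerivAt (fun s : ℝ => (s, x)) ((1:ℝ), (0:ℝ)) t :=
    (hasDerivAt_id t).prodMk (hasDerivAt_const t x)
  exact h1.comp_hasDerivAt t h2

lemma SmH.hasDerivX_aux2 {F : ℝ → ℝ → ℝ} (hF : SmH F) {t : ℝ} (ht : 1 < t) (x : ℝ) :
    HasDerivAt (F t) (fderiv ℝ (fun p : ℝ × ℝ => F p.1 p.2) (t, x) (0, 1)) x := by
  have h1 := ((hF.contDiffAt ht x).differentiableAt (by simp)).hasFDerivAt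
  have h2 : HasDerivAt (fun y : ℝ => (t, y)) ((0:ℝ), (1:ℝ)) x :=
    (hasDerivAt_const x t).prodMk (hasDerivAt_id x)
  exact h1.comp_hasDerivAt x h2

lemma SmH.hasDerivT {F : ℝ → ℝ → ℝ} (hF : SmH F) {t : ℝ} (ht : 1 < t) (x : ℝ) :
    HasDerivAt (fun s => F s x) (pderivT F t x) t :=
  (hF.hasDerivT_aux ht x).differentiableAt.hasDerivAt

lemma SmH.pderivT_eq {F : ℝ → ℝ → ℝ} (hF : SmH F) {t : ℝ} (ht : 1 < t) (x : ℝ) :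
    pderivT F t x = fderiv ℝ (fun p : ℝ × ℝ => F p.1 p.2) (t, x) (1, 0) :=
  (hF.hasDerivT_aux ht x).deriv

lemma SmH.contT {F : ℝ → ℝ → ℝ} (hF : SmH F) :
    ContinuousOn (fun p : ℝ × ℝ => pderivT F p.1 p.2) (Set.Ioi 1 ×ˢ Set.univ) := by
  intro p hp
  obtain ⟨t, x⟩ := p
  have ht : 1 < t := hp.1
  have h := (hF.contDiffAt ht x).fderiv_right (m := 0) (by simp)
  have h2 := (h.clm_apply (contDiffAt_const (c := ((1:ℝ), (0:ℝ))))).continuousAt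
  have h3 : ContinuousWithinAt (fun p : ℝ × ℝ =>
    fderiv ℝ (fun p : ℝ × ℝ => F p.1 p.2) p (1, 0)) (Set.Ioi 1 ×ˢ Set.univ) (t, x) :=
    h2.continuousWithinAt
  refine h3.congr ?_ ?_
  · rintro ⟨s, y⟩ ⟨hs, -⟩
    exact hF.pderivT_eq hs y
  · exact hF.pderivT_eq ht x

/-- Mixed derivatives commute. -/
lemma SmH.hasDerivXT {F : ℝ → ℝ → ℝ} (hF : SmH F) {t : ℝ} (ht : 1 < t) (x : ℝ) :
    HasDerivAt (fun y => pderivT F t y) (pderivT (pderivX F) t x) x := by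
  set f : ℝ × ℝ → ℝ := fun p : ℝ × ℝ => F p.1 p.2 with hf
  have hc := hF.contDiffAt ht x
  have hd : DifferentiableAt ℝ (fderiv ℝ f) (t, x) :=
    (hc.fderiv_right (m := ((⊤ : ℕ∞) : WithTop ℕ∞)) (by simp)).differentiableAt (by simp)
  have hsym := hc.isSymmSndFDerivAt (by
    simp only [minSmoothness_of_isRCLikeNormedField]
    exact WithTop.coe_le_coe.2 (le_top : (2 : ℕ∞) ≤ ⊤))
  have h2 : HasDerivAt (fun y : ℝ => (t, y)) ((0:ℝ), (1:ℝ)) x :=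
    (hasDerivAt_const x t).prodMk (hasDerivAt_id x)
  have h2' : HasDerivAt (fun s : ℝ => (s, x)) ((1:ℝ), (0:ℝ)) t :=
    (hasDerivAt_id t).prodMk (hasDerivAt_const t x)
  have h3 : HasDerivAt (fun y => fderiv ℝ f (t, y) (1, 0))
      (fderiv ℝ (fderiv ℝ f) (t, x) (0, 1) (1, 0)) x :=
    ((ContinuousLinearMap.apply ℝ ℝ ((1:ℝ), (0:ℝ))).hasFDerivAt.comp_hasDerivAt x
      (hd.hasFDerivAt.comp_hasDerivAt x h2))
  have h4 : HasDerivAt (fun s => fderiv ℝ f (s, x) (0, 1))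
      (fderiv ℝ (fderiv ℝ f) (t, x) (1, 0) (0, 1)) t :=
    ((ContinuousLinearMap.apply ℝ ℝ ((0:ℝ), (1:ℝ))).hasFDerivAt.comp_hasDerivAt t
      (hd.hasFDerivAt.comp_hasDerivAt t h2'))
  have h5 : pderivT (pderivX F) t x = fderiv ℝ (fderiv ℝ f) (t, x) (1, 0) (0, 1) := by
    have : HasDerivAt (fun s => pderivX F s x) (fderiv ℝ (fderiv ℝ f) (t, x) (1, 0) (0, 1)) t := by
      refine HasDerivAt.congr_of_eventuallyEq h4 ?_
      filter_upwards [Ioi_mem_nhds ht] with s hs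
      exact (hF.hasDerivX_aux2 hs x).deriv
    exact this.deriv
  rw [h5, hsym.eq]
  have h6 : (fun y => pderivT F t y) = fun y => fderiv ℝ f (t, y) (1, 0) := by
    funext y
    exact hF.pderivT_eq ht y
  rw [h6]
  exact h3

lemma SmH.cont {F : ℝ → ℝ → ℝ} (hF : SmH F) {t : ℝ} (ht : 1 ≤ t) : Continuous (F t) :=
  continuous_iff_continuousAt.2 fun x => (hF.hasDerivX ht x).continuousAt

lemma SmH.contT' {F : ℝ → ℝ → ℝ} (hF : SmH F) {t : ℝ} (ht : 1 < t) :
    Continuous (pderivT F t) :=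
  continuous_iff_continuousAt.2 fun x => (hF.hasDerivXT ht x).continuousAt

lemma SmH.continuousOn_integral {F : ℝ → ℝ → ℝ} (hF : SmH F) (a b : ℝ) :
    ContinuousOn (fun t => ∫ x in a..b, F t x) (Set.Ici 1) := by
  have h1 : Continuous (fun p : ℝ × ℝ => F (max p.1 1) p.2) := by
    have h2 : ContinuousOn (fun p : ℝ × ℝ => F p.1 p.2) (Set.Ici 1 ×ˢ Set.univ) :=
      hF.continuousOn
    have h3 : Continuous (fun p : ℝ × ℝ => ((max p.1 1, p.2) : ℝ × ℝ)) := by fun_prop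
    exact h2.comp_continuous h3 (fun p => ⟨(le_max_right p.1 1 : (1:ℝ) ≤ max p.1 1), trivial⟩)
  have h4 := intervalIntegral.continuous_parametric_intervalIntegral_of_continuous'
    (μ := volume) (f := fun t x => F (max t 1) x) h1 a b
  refine h4.continuousOn.congr ?_
  intro t ht
  have : max t 1 = t := max_eq_left ht
  simp only [this]

lemma SmH.hasDerivAt_integral {F : ℝ → ℝ → ℝ} (hF : SmH F) {t : ℝ} (ht : 1 < t) (a b : ℝ) :
    HasDerivAt (fun t => ∫ x in a..b, F t x) (∫ x in a..b, pderivT F t x) t := by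
  obtain ⟨c, hc1, hct⟩ := exists_between ht
  have hK : IsCompact (Set.Icc c (t+1) ×ˢ Set.uIcc a b) := isCompact_Icc.prod isCompact_uIcc
  have hcont : ContinuousOn (fun p : ℝ × ℝ => pderivT F p.1 p.2)
      (Set.Icc c (t+1) ×ˢ Set.uIcc a b) := hF.contT.mono
    (Set.prod_mono (fun s hs => lt_of_lt_of_le hc1 hs.1) (Set.subset_univ _))
  obtain ⟨C, hC⟩ := hK.exists_bound_of_continuousOn hcont
  refine (intervalIntegral.hasDerivAt_integral_of_dominated_loc_of_deriv_le (bound := fun _ => C)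
    (F' := fun s x => pderivT F s x)
    (Icc_mem_nhds hct (by linarith : t < t + 1)) ?_ ?_ ?_ ?_ ?_ ?_).2
  · filter_upwards [Ioi_mem_nhds ht] with s hs
    exact (hF.cont (le_of_lt hs)).aestronglyMeasurable
  · exact (hF.cont ht.le).intervalIntegrable _ _
  · exact (hF.contT' ht).aestronglyMeasurable
  · refine Filter.Eventually.of_forall fun x hx s hs => ?_
    exact hC (s, x) ⟨hs, Set.uIoc_subset_uIcc hx⟩
  · simp
  · refine Filter.Eventually.of_forall fun x hx s hs => ?_
    exact hF.hasDerivT (lt_of_lt_of_le hc1 hs.1) x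


/-- `φ` with first and second derivatives `φ1`, `φ2`, bounded by `B` on `[-1/2,1/2]`. -/
structure CoefBd (B : ℝ) (φ φ1 φ2 : ℝ → ℝ) : Prop where
  d1 : ∀ v, |v| ≤ 1/2 → HasDerivAt φ (φ1 v) v
  d2 : ∀ v, |v| ≤ 1/2 → HasDerivAt φ1 (φ2 v) v
  b1 : ∀ v, |v| ≤ 1/2 → |φ1 v| ≤ B
  b2 : ∀ v, |v| ≤ 1/2 → |φ2 v| ≤ B

lemma CoefBd.mono {B B' : ℝ} {φ φ1 φ2 : ℝ → ℝ} (h : CoefBd B φ φ1 φ2) (hB : B ≤ B') :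
    CoefBd B' φ φ1 φ2 :=
  ⟨h.d1, h.d2, fun v hv => (h.b1 v hv).trans hB, fun v hv => (h.b2 v hv).trans hB⟩

lemma CoefBd.exists_of {φ : ℝ → ℝ} (h : ContDiffOn ℝ (⊤ : ℕ∞) φ (Set.Ioo (-1) 1)) :
    ∃ B, CoefBd B φ (deriv φ) (deriv (deriv φ)) := by
  have ho : IsOpen (Set.Ioo (-1:ℝ) 1) := isOpen_Ioo
  have h1 : ContDiffOn ℝ (⊤ : ℕ∞) (deriv φ) (Set.Ioo (-1) 1) :=
    h.deriv_of_isOpen ho (by simp)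
  have h2 : ContDiffOn ℝ (⊤ : ℕ∞) (deriv (deriv φ)) (Set.Ioo (-1) 1) :=
    h1.deriv_of_isOpen ho (by simp)
  have hsub : Set.Icc (-(1/2):ℝ) (1/2) ⊆ Set.Ioo (-1) 1 := by
    intro x hx
    constructor <;> linarith [hx.1, hx.2]
  obtain ⟨B1, hB1⟩ := isCompact_Icc.exists_bound_of_continuousOn (h1.continuousOn.mono hsub)
  obtain ⟨B2, hB2⟩ := isCompact_Icc.exists_bound_of_continuousOn (h2.continuousOn.mono hsub)
  have key : ∀ v : ℝ, |v| ≤ 1/2 → v ∈ Set.Icc (-(1/2):ℝ) (1/2) := fun v hv => abs_le.1 hv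
  refine ⟨max B1 B2, ?_, ?_, ?_, ?_⟩
  · intro v hv
    exact ((h.contDiffAt (ho.mem_nhds (hsub (key v hv)))).differentiableAt (by simp)).hasDerivAt
  · intro v hv
    exact ((h1.contDiffAt (ho.mem_nhds (hsub (key v hv)))).differentiableAt (by simp)).hasDerivAt
  · intro v hv
    exact (hB1 v (key v hv)).trans (le_max_left _ _)
  · intro v hv
    exact (hB2 v (key v hv)).trans (le_max_right _ _)

lemma lip_aux {φ φ1 : ℝ → ℝ} {C v : ℝ} (hd : ∀ u, |u| ≤ |v| → HasDerivAt φ (φ1 u) u)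
    (hb : ∀ u, |u| ≤ |v| → |φ1 u| ≤ C) : |φ v - φ 0| ≤ C * |v| := by
  have := Convex.norm_image_sub_le_of_norm_hasDerivWithin_le (f := φ) (f' := φ1)
    (s := Set.Icc (-|v|) |v|) (x := 0) (y := v) (C := C)
    (fun x hx => (hd x (abs_le.2 hx)).hasDerivWithinAt) (fun x hx => hb x (abs_le.2 hx))
    (convex_Icc _ _) (by simp) (abs_le.1 le_rfl)
  simpa using this

lemma CoefBd.lip {B : ℝ} {φ φ1 φ2 : ℝ → ℝ} (h : CoefBd B φ φ1 φ2) {v : ℝ} (hv : |v| ≤ 1/2) :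
    |φ v - φ 0| ≤ B * |v| :=
  lip_aux (fun u hu => h.d1 u (hu.trans hv)) (fun u hu => h.b1 u (hu.trans hv))

lemma CoefBd.lip1 {B : ℝ} {φ φ1 φ2 : ℝ → ℝ} (h : CoefBd B φ φ1 φ2) {v : ℝ} (hv : |v| ≤ 1/2) :
    |φ1 v - φ1 0| ≤ B * |v| :=
  lip_aux (fun u hu => h.d2 u (hu.trans hv)) (fun u hu => h.b2 u (hu.trans hv))

lemma CoefBd.quad {B : ℝ} {φ φ1 φ2 : ℝ → ℝ} (h : CoefBd B φ φ1 φ2) (hB : 0 ≤ B)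
    (h0 : φ 0 = 0) (h1 : φ1 0 = 0) {v : ℝ} (hv : |v| ≤ 1/2) :
    |φ v| ≤ B * |v| * |v| := by
  have := lip_aux (φ := φ) (φ1 := φ1) (C := B * |v|) (v := v)
    (fun u hu => h.d1 u (hu.trans hv)) (fun u hu => by
      have := h.lip1 (hu.trans hv)
      rw [h1, sub_zero] at this
      exact this.trans (mul_le_mul_of_nonneg_left hu hB))
  simpa [h0] using this

/-- All the coefficient functions of the system. -/
structure Coefs (a K B : ℝ) (m m1 m2 n n1 n2 r r1 r2 f f1 f2 g g1 g2 : ℝ → ℝ) : Prop where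
  B1 : 1 ≤ B
  m_eq : ∀ v, m v = (1 - K) * v / (1 - K * v ^ 2)
  n_eq : ∀ v, n v = (1 - v ^ 2) ^ 2 / (1 - K * v ^ 2)
  r_eq : ∀ v, r v = 1 / (1 - K * v ^ 2)
  f_eq : ∀ v, f v = a * (1 - K) * v ^ 3 / (1 - K * v ^ 2)
  g_eq : ∀ v, g v = a * (1 + K) * v ^ 2 / (1 - K * v ^ 2)
  f10 : f1 0 = 0
  g10 : g1 0 = 0
  cm : CoefBd B m m1 m2
  cn : CoefBd B n n1 n2
  cr : CoefBd B r r1 r2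
  cf : CoefBd B f f1 f2
  cg : CoefBd B g g1 g2

lemma coefs_exist (a K : ℝ) (hK0 : 0 < K) (hK3 : K < 1 / 3) (D : ℝ) :
    ∃ B m m1 m2 n n1 n2 r r1 r2 f f1 f2 g g1 g2, D ≤ B ∧
      Coefs a K B m m1 m2 n n1 n2 r r1 r2 f f1 f2 g g1 g2 := by
  have hne : ∀ v ∈ Set.Ioo (-1:ℝ) 1, 1 - K * v ^ 2 ≠ 0 := by
    intro v hv
    have : v ^ 2 < 1 := by nlinarith [hv.1, hv.2]
    nlinarith
  have hs : ∀ P : ℝ → ℝ, ContDiff ℝ (⊤ : ℕ∞) P →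
      ContDiffOn ℝ (⊤ : ℕ∞) (fun v => P v / (1 - K * v ^ 2)) (Set.Ioo (-1:ℝ) 1) := by
    intro P hP
    exact hP.contDiffOn.div (by fun_prop) hne
  obtain ⟨B1, h1⟩ := CoefBd.exists_of (hs (fun v => (1 - K) * v) (by fun_prop))
  obtain ⟨B2, h2⟩ := CoefBd.exists_of (hs (fun v => (1 - v ^ 2) ^ 2) (by fun_prop))
  obtain ⟨B3, h3⟩ := CoefBd.exists_of (hs (fun v => 1) (by fun_prop))
  obtain ⟨B4, h4⟩ := CoefBd.exists_of (hs (fun v => a * (1 - K) * v ^ 3) (by fun_prop))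
  obtain ⟨B5, h5⟩ := CoefBd.exists_of (hs (fun v => a * (1 + K) * v ^ 2) (by fun_prop))
  have hq : HasDerivAt (fun v : ℝ => 1 - K * v ^ 2) 0 0 := by
    have := ((hasDerivAt_pow 2 (0:ℝ)).const_mul K).const_sub 1
    simpa using this
  refine ⟨max 1 (max D (max B1 (max B2 (max B3 (max B4 B5))))), _, _, _, _, _, _, _, _, _, _, _, _,
    _, _, _, ?_, ?_, fun _ => rfl, fun _ => rfl, fun _ => rfl, fun _ => rfl, fun _ => rfl, ?_, ?_,
    h1.mono ?_, h2.mono ?_, h3.mono ?_, h4.mono ?_, h5.mono ?_⟩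
  · simp
  · simp
  · have := ((hasDerivAt_pow 3 (0:ℝ)).const_mul (a * (1 - K))).div hq (by simp)
    refine Eq.trans this.deriv (by simp)
  · have := ((hasDerivAt_pow 2 (0:ℝ)).const_mul (a * (1 + K))).div hq (by simp)
    refine Eq.trans this.deriv (by simp)
  all_goals simp


lemma mul_bd {c x D R : ℝ} (hc : |c| ≤ D) (hx : |x| ≤ R) : |c * x| ≤ D * R := by
  rw [abs_mul]
  exact mul_le_mul hc hx (abs_nonneg _) ((abs_nonneg _).trans hc)

lemma mul_bd1 {k x D : ℝ} (hk0 : 0 ≤ k) (hk1 : k ≤ 1) (hx : |x| ≤ D) : |k * x| ≤ D := by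
  rw [abs_mul, abs_of_nonneg hk0]
  nlinarith [abs_nonneg x]

lemma mul_bd2 {k x D : ℝ} (hk0 : 0 ≤ k) (hk1 : k ≤ 2) (hx : |x| ≤ D) : |k * x| ≤ 2 * D := by
  rw [abs_mul, abs_of_nonneg hk0]
  nlinarith [abs_nonneg x]

lemma rho_v_bd {B s R k m n f p q : ℝ} (hk0 : 0 ≤ k) (hk1 : k ≤ 1)
    (hm : |m| ≤ B * s) (hn : |n - 1| ≤ B * s) (hf : |f| ≤ B * s * R)
    (hp : |p| ≤ R) (hq : |q| ≤ R) :
    |-(m * p) - k * ((n - 1) * q) + f| ≤ 14 * B * s * R := by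
  have h1 := mul_bd hm hp
  have h2 := mul_bd1 hk0 hk1 (mul_bd hn hq)
  have h0 := (abs_nonneg _).trans hf
  rw [abs_le] at *
  constructor <;> linarith [h1.1, h1.2, h2.1, h2.2, hf.1, hf.2]

lemma rho_p_bd {B s R k m m1 n n1 f1 p q V Λ : ℝ} (hk0 : 0 ≤ k) (hk1 : k ≤ 1)
    (hm : |m| ≤ B * s) (hn : |n - 1| ≤ B * s) (hm1 : |m1| ≤ B) (hn1 : |n1| ≤ B)
    (hf1 : |f1| ≤ B * s) (hps : |p| ≤ s)
    (hp : |p| ≤ R) (hq : |q| ≤ R) (hV : |V| ≤ R) (hΛ : |Λ| ≤ R) :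
    |-(m * V) - k * ((n - 1) * Λ) - m1 * p * p - k * (n1 * p * q) + f1 * p|
      ≤ 14 * B * s * R := by
  have h1 := mul_bd hm hV
  have h2 := mul_bd1 hk0 hk1 (mul_bd hn hΛ)
  have h3 := mul_bd (mul_bd hm1 hps) hp
  have h4 := mul_bd1 hk0 hk1 (mul_bd (mul_bd hn1 hps) hq)
  have h5 := mul_bd hf1 hp
  have h0 := (abs_nonneg _).trans h5
  rw [abs_le] at h1 h2 h3 h4 h5 ⊢
  constructor <;> linarith [h1.1, h1.2, h2.1, h2.2, h3.1, h3.2, h4.1, h4.2, h5.1, h5.2]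

lemma rho_q_bd {B s R K m m1 r r1 g1 p q V Λ : ℝ} (hk0 : 0 ≤ 1 + K) (hk1 : 1 + K ≤ 2)
    (hm : |m| ≤ B * s) (hr : |r - 1| ≤ B * s) (hm1 : |m1| ≤ B) (hr1 : |r1| ≤ B)
    (hg1 : |g1| ≤ B * s) (hps : |p| ≤ s)
    (hp : |p| ≤ R) (hq : |q| ≤ R) (hV : |V| ≤ R) (hΛ : |Λ| ≤ R) :
    |-((1 + K) * ((r - 1) * V)) - m * Λ - (1 + K) * (r1 * p * p) - m1 * p * q + g1 * p|
      ≤ 14 * B * s * R := by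
  have h1 := mul_bd hm hΛ
  have h2 := mul_bd2 hk0 hk1 (mul_bd hr hV)
  have h3 := mul_bd (mul_bd hm1 hps) hq
  have h4 := mul_bd2 hk0 hk1 (mul_bd (mul_bd hr1 hps) hp)
  have h5 := mul_bd hg1 hp
  have h0 := (abs_nonneg _).trans h5
  rw [abs_le] at h1 h2 h3 h4 h5 ⊢
  constructor <;> linarith [h1.1, h1.2, h2.1, h2.2, h3.1, h3.2, h4.1, h4.2, h5.1, h5.2]

/-- Bound of the commutator part of a second derivative `∂ₓ²(φ(v) y)`. -/
lemma comm_bd {B s R φ1 φ2 p V y y1 : ℝ} (hs : s ≤ 1)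
    (h1 : |φ1| ≤ B) (h2 : |φ2| ≤ B) (hps : |p| ≤ s) (hys : |y| ≤ s)
    (hp : |p| ≤ R) (hV : |V| ≤ R) (hy1 : |y1| ≤ R) :
    |2 * (φ1 * p * y1) + (φ2 * p * p + φ1 * V) * y| ≤ 4 * B * s * R := by
  have a1 := mul_bd (mul_bd h1 hps) hy1
  have a2 := mul_bd (mul_bd (mul_bd h2 hps) hp) (hys.trans hs)
  have a3 := mul_bd (mul_bd h1 hV) hys
  rw [abs_le] at a1 a2 a3 ⊢
  constructor <;> linarith [a1.1, a1.2, a2.1, a2.2, a3.1, a3.2]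

lemma src_bd {B s R f1 f2 p V : ℝ} 
    (h1 : |f1| ≤ B * s) (h2 : |f2| ≤ B) (hps : |p| ≤ s) (hp : |p| ≤ R) (hV : |V| ≤ R) :
    |f2 * p * p + f1 * V| ≤ 2 * B * s * R := by
  have a1 := mul_bd (mul_bd h2 hps) hp
  have a3 := mul_bd h1 hV
  rw [abs_le] at a1 a3 ⊢
  constructor <;> linarith [a1.1, a1.2, a3.1, a3.2]

lemma rho_V_bd {B s R k m1 m2 n1 n2 f1 f2 p q V Λ : ℝ} (hk0 : 0 ≤ k) (hk1 : k ≤ 1)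
    (hs : s ≤ 1) (hm1 : |m1| ≤ B) (hm2 : |m2| ≤ B) (hn1 : |n1| ≤ B) (hn2 : |n2| ≤ B)
    (hf1 : |f1| ≤ B * s) (hf2 : |f2| ≤ B) (hps : |p| ≤ s) (hqs : |q| ≤ s)
    (hp : |p| ≤ R) (hV : |V| ≤ R) (hΛ : |Λ| ≤ R) :
    |-(2 * (m1 * p * V) + (m2 * p * p + m1 * V) * p)
      - k * (2 * (n1 * p * Λ) + (n2 * p * p + n1 * V) * q) + (f2 * p * p + f1 * V)|
      ≤ 14 * B * s * R := by
  have h1 := comm_bd hs hm1 hm2 hps hps hp hV hV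
  have h2 := mul_bd1 hk0 hk1 (comm_bd hs hn1 hn2 hps hqs hp hV hΛ)
  have h3 := src_bd hf1 hf2 hps hp hV
  have h0 := (abs_nonneg _).trans h3
  rw [abs_le] at h1 h2 h3 ⊢
  constructor <;> linarith [h1.1, h1.2, h2.1, h2.2, h3.1, h3.2]

lemma rho_L_bd {B s R K m1 m2 r1 r2 g1 g2 p q V Λ : ℝ} (hk0 : 0 ≤ 1 + K) (hk1 : 1 + K ≤ 2)
    (hs : s ≤ 1) (hm1 : |m1| ≤ B) (hm2 : |m2| ≤ B) (hr1 : |r1| ≤ B) (hr2 : |r2| ≤ B)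
    (hg1 : |g1| ≤ B * s) (hg2 : |g2| ≤ B) (hps : |p| ≤ s) (hqs : |q| ≤ s)
    (hp : |p| ≤ R) (hV : |V| ≤ R) (hΛ : |Λ| ≤ R) :
    |-((1 + K) * (2 * (r1 * p * V) + (r2 * p * p + r1 * V) * p))
      - (2 * (m1 * p * Λ) + (m2 * p * p + m1 * V) * q) + (g2 * p * p + g1 * V)|
      ≤ 14 * B * s * R := by
  have h1 := comm_bd hs hm1 hm2 hps hqs hp hV hΛ
  have h2 := mul_bd2 hk0 hk1 (comm_bd hs hr1 hr2 hps hps hp hV hV)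
  have h3 := src_bd hg1 hg2 hps hp hV
  have h0 := (abs_nonneg _).trans h3
  rw [abs_le] at h1 h2 h3 ⊢
  constructor <;> linarith [h1.1, h1.2, h2.1, h2.2, h3.1, h3.2]

set_option maxHeartbeats 1000000 in
/-- The pointwise energy identity/inequality. `b = 14 B`. -/
lemma energy_point {B s R K k A T d m m1 n n1 r w w1 v p q V Λ P3 Q3 ρv ρp ρq ρV ρΛ : ℝ}
    (hB : 1 ≤ B) (hs0 : 0 ≤ s) (hs : s ≤ 1 / 2) (hR : 0 ≤ R)
    (hk0 : 0 ≤ k) (hk1 : k ≤ 1) (hK0 : 0 ≤ K) (hK1 : K ≤ 1) (hA0 : 0 ≤ A) (hAB : A ≤ B)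
    (hAk : A * k = 1 + K) (hT : 0 ≤ T) (hd0 : 0 ≤ d) (hdT : d ≤ T)
    (hm : |m| ≤ B * s) (hm1 : |m1| ≤ B) (hn1 : |n1| ≤ B) 
    (hw0 : 0 ≤ w) (hwle : w ≤ 1) (hw1 : |w1| ≤ 4 * s) (hwr : w * r = n)
    (hvs : |v| ≤ s) (hps : |p| ≤ s) (hqs : |q| ≤ s)
    (hv : |v| ≤ R) (hp : |p| ≤ R) (hq : |q| ≤ R) (hV : |V| ≤ R) (hΛ : |Λ| ≤ R)
    (hρv : |ρv| ≤ 14 * B * s * 3) (hρp : |ρp| ≤ 14 * B * s * R) (hρq : |ρq| ≤ 14 * B * s * R)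
    (hρV : |ρV| ≤ 14 * B * s * R) (hρΛ : |ρΛ| ≤ 14 * B * s * R) :
    2 * A * p * (-d * p + T * (-k * Λ + ρp)) + 2 * q * (T * (-(1 + K) * V + ρq))
      + 2 * A * V * (-d * V + T * (-m * P3 - k * n * Q3 + ρV))
      + 2 * w * Λ * (T * (-(1 + K) * r * P3 - m * Q3 + ρΛ))
      + w1 * (-d * v + T * (-k * q + ρv)) * Λ ^ 2
    ≤ -2 * d * A * (p ^ 2 + V ^ 2)
      + T * (-2 * (1 + K) * (V * q + p * Λ) - A * (m1 * p * V ^ 2 + 2 * m * V * P3)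
        - ((m1 * p * w + m * (w1 * p)) * Λ ^ 2 + 2 * m * w * Λ * Q3)
        - 2 * (1 + K) * (n1 * p * V * Λ + n * P3 * Λ + n * V * Q3))
      + 1000 * B ^ 2 * T * s * R ^ 2 := by
  have hBs : 0 ≤ B * s := by positivity
  have e1 := mul_bd (mul_bd (abs_le.2 ⟨by linarith, hAB⟩ : |A| ≤ B) hp) hρp
  have e2 := mul_bd hq hρq
  have e3 := mul_bd (mul_bd (abs_le.2 ⟨by linarith, hAB⟩ : |A| ≤ B) hV) hρV
  have hw : |w| ≤ 1 := abs_le.2 ⟨by linarith, hwle⟩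
  have e4 := mul_bd (mul_bd hw hΛ) hρΛ
  have hΛ2 : |Λ ^ 2| ≤ R ^ 2 := by
    rw [abs_pow]; exact pow_le_pow_left₀ (abs_nonneg _) hΛ 2
  have hV2 : |V ^ 2| ≤ R ^ 2 := by
    rw [abs_pow]; exact pow_le_pow_left₀ (abs_nonneg _) hV 2
  have hvt : |-d * v + T * (-k * q + ρv)| ≤ T * (50 * B) := by
    have a1 : |-d * v| ≤ T * s := mul_bd (by rw [abs_neg, abs_of_nonneg hd0]; exact hdT) hvs
    have a2 : |k * q| ≤ s := mul_bd1 hk0 hk1 hqs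
    have a3 : |-k * q + ρv| ≤ s + 14 * B * s * 3 := by
      rw [abs_le] at a2 hρv ⊢
      constructor <;> linarith [a2.1, a2.2, hρv.1, hρv.2]
    have a4 := mul_bd (le_of_eq (abs_of_nonneg hT)) a3
    have a5 : T * s + T * (s + 14 * B * s * 3) ≤ T * (50 * B) := by
      have : s + (s + 14 * B * s * 3) ≤ 50 * B := by nlinarith
      nlinarith
    exact ((abs_add_le _ _).trans (add_le_add a1 a4)).trans a5
  have e5 := mul_bd (mul_bd hw1 hvt) hΛ2
  have e6 := mul_bd (mul_bd (abs_le.2 ⟨by linarith, hAB⟩ : |A| ≤ B) (mul_bd hm1 hps)) hV2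
  have e7 := mul_bd (mul_bd (mul_bd hm1 hps) hw) hΛ2
  have hw1' : |w1 * p| ≤ 1 := by
    have := mul_bd hw1 hps
    nlinarith
  have e8 := mul_bd (mul_bd hm hw1') hΛ2
  have e9 := mul_bd2 (by linarith : 0 ≤ 1 + K) (by linarith) (mul_bd (mul_bd (mul_bd hn1 hps) hV) hΛ)
  rw [← sub_nonneg]
  have id : -2 * d * A * (p ^ 2 + V ^ 2)
      + T * (-2 * (1 + K) * (V * q + p * Λ) - A * (m1 * p * V ^ 2 + 2 * m * V * P3)
        - ((m1 * p * w + m * (w1 * p)) * Λ ^ 2 + 2 * m * w * Λ * Q3)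
        - 2 * (1 + K) * (n1 * p * V * Λ + n * P3 * Λ + n * V * Q3))
      + 1000 * B ^ 2 * T * s * R ^ 2 - (2 * A * p * (-d * p + T * (-k * Λ + ρp)) + 2 * q * (T * (-(1 + K) * V + ρq))
      + 2 * A * V * (-d * V + T * (-m * P3 - k * n * Q3 + ρV))
      + 2 * w * Λ * (T * (-(1 + K) * r * P3 - m * Q3 + ρΛ))
      + w1 * (-d * v + T * (-k * q + ρv)) * Λ ^ 2)
    = T * (1000 * B ^ 2 * s * R ^ 2 - 2 * (A * p * ρp) - 2 * (q * ρq) - 2 * (A * V * ρV)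
        - 2 * (w * Λ * ρΛ) - A * (m1 * p) * V ^ 2 - m1 * p * w * Λ ^ 2 - m * (w1 * p) * Λ ^ 2
        - 2 * ((1 + K) * (n1 * p * V * Λ)))
      - w1 * (-d * v + T * (-k * q + ρv)) * Λ ^ 2 := by
    rw [← hwr, ← hAk]; ring
  rw [id]
  have hBB : B ≤ B ^ 2 := by nlinarith
  have hsR : 0 ≤ s * R ^ 2 := by positivity
  have f1 : B * (s * R ^ 2) ≤ B ^ 2 * (s * R ^ 2) := mul_le_mul_of_nonneg_right hBB hsR
  have g0 := mul_nonneg hT (mul_nonneg (sq_nonneg B) hsR)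
  have g1 : 300 * (B ^ 2 * (s * R ^ 2)) ≤ 1000 * B ^ 2 * s * R ^ 2 - 2 * (A * p * ρp) - 2 * (q * ρq) - 2 * (A * V * ρV)
        - 2 * (w * Λ * ρΛ) - A * (m1 * p) * V ^ 2 - m1 * p * w * Λ ^ 2 - m * (w1 * p) * Λ ^ 2
        - 2 * ((1 + K) * (n1 * p * V * Λ)) := by
    rw [abs_le] at e1 e2 e3 e4 e6 e7 e8 e9
    have g00 := mul_nonneg (sq_nonneg B) hsR
    linarith [e1.2, e2.2, e3.2, e4.2, e6.2, e7.2, e8.2, e9.2]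
  have g2 := mul_le_mul_of_nonneg_left g1 hT
  have g3 : 4 * s * (T * (50 * B)) * R ^ 2 ≤ T * (300 * (B ^ 2 * (s * R ^ 2))) := by
    have := mul_le_mul_of_nonneg_left f1 hT
    linarith
  linarith [(abs_le.1 e5).2]

/-- The pointwise corrector estimate. -/
lemma corr_point {B s R K k T d m m1 n n1 v p q V Λ P3 Q3 ρv ρq ρV : ℝ}
    (hB : 1 ≤ B) (hs0 : 0 ≤ s)
    (hk0 : 0 ≤ k) (hk1 : k ≤ 1) (hT : 0 ≤ T)
    (hm : |m| ≤ B * s) (hm1 : |m1| ≤ B) (hn1 : |n1| ≤ B) (hn : |n - 1| ≤ B * s)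
    (hps : |p| ≤ s)
    (hv : |v| ≤ R) (hq : |q| ≤ R) (hV : |V| ≤ R) (hΛ : |Λ| ≤ R)
    (hρv : |ρv| ≤ 14 * B * s * R) (hρq : |ρq| ≤ 14 * B * s * R)
    (hρV : |ρV| ≤ 14 * B * s * R) :
    (-d * v + T * (-k * q + ρv)) * q + v * (T * (-(1 + K) * V + ρq))
      - ((-d * V + T * (-m * P3 - k * n * Q3 + ρV)) * q + V * (T * (-(1 + K) * V + ρq)))
    ≤ -d * (v * q - V * q) + T * ((1 + K) * (p ^ 2 + V ^ 2) - k * (q ^ 2 + Λ ^ 2))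
      + T * (-(1 + K) * (p * p + v * V) + (m1 * p * V * q + m * (P3 * q + V * Λ))
        + k * (n1 * p * Λ * q + n * (Q3 * q + Λ * Λ)))
      + 1000 * B ^ 2 * T * s * R ^ 2 := by
  have e1 := mul_bd (mul_bd (mul_bd hm1 hps) hV) hq
  have e2 := mul_bd (mul_bd hm hV) hΛ
  have e3 := mul_bd1 hk0 hk1 (mul_bd (mul_bd (mul_bd hn1 hps) hΛ) hq)
  have e4 := mul_bd1 hk0 hk1 (mul_bd (mul_bd hn hΛ) hΛ)
  have e5 := mul_bd hρv hq
  have e6 := mul_bd hv hρq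
  have e7 := mul_bd hρV hq
  have e8 := mul_bd hV hρq
  rw [← sub_nonneg]
  have id : -d * (v * q - V * q) + T * ((1 + K) * (p ^ 2 + V ^ 2) - k * (q ^ 2 + Λ ^ 2))
      + T * (-(1 + K) * (p * p + v * V) + (m1 * p * V * q + m * (P3 * q + V * Λ))
        + k * (n1 * p * Λ * q + n * (Q3 * q + Λ * Λ)))
      + 1000 * B ^ 2 * T * s * R ^ 2
      - ((-d * v + T * (-k * q + ρv)) * q + v * (T * (-(1 + K) * V + ρq))
      - ((-d * V + T * (-m * P3 - k * n * Q3 + ρV)) * q + V * (T * (-(1 + K) * V + ρq))))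
    = T * (1000 * B ^ 2 * s * R ^ 2 + m1 * p * V * q + m * V * Λ + k * (n1 * p * Λ * q)
        + k * ((n - 1) * Λ * Λ) - ρv * q - v * ρq + ρV * q + V * ρq) := by
    ring
  rw [id]
  have hBB : B ≤ B ^ 2 := by nlinarith
  have hsR : 0 ≤ s * R ^ 2 := by positivity
  have f1 : B * (s * R ^ 2) ≤ B ^ 2 * (s * R ^ 2) := mul_le_mul_of_nonneg_right hBB hsR
  have g0 := mul_nonneg (sq_nonneg B) hsR
  refine mul_nonneg hT ?_
  rw [abs_le] at e1 e2 e3 e4 e5 e6 e7 e8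
  linarith [e1.1, e2.1, e3.1, e4.1, e5.2, e6.2, e7.1, e8.1]


section calc1
variable {B : ℝ} {φ φ1 φ2 : ℝ → ℝ} {u p V y y1 y2 : ℝ → ℝ}

lemma CoefBd.src1 (h : CoefBd B φ φ1 φ2) (hu : ∀ x, |u x| ≤ 1/2)
    (hp : ∀ x, HasDerivAt u (p x) x) (x : ℝ) :
    HasDerivAt (fun x => φ (u x)) (φ1 (u x) * p x) x :=
  (h.d1 _ (hu x)).comp x (hp x)

lemma CoefBd.src1' (h : CoefBd B φ φ1 φ2) (hu : ∀ x, |u x| ≤ 1/2)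
    (hp : ∀ x, HasDerivAt u (p x) x) (x : ℝ) :
    HasDerivAt (fun x => φ1 (u x)) (φ2 (u x) * p x) x :=
  (h.d2 _ (hu x)).comp x (hp x)

lemma CoefBd.src2 (h : CoefBd B φ φ1 φ2) (hu : ∀ x, |u x| ≤ 1/2)
    (hp : ∀ x, HasDerivAt u (p x) x) (hV : ∀ x, HasDerivAt p (V x) x) (x : ℝ) :
    HasDerivAt (fun x => φ1 (u x) * p x) (φ2 (u x) * p x * p x + φ1 (u x) * V x) x :=
  (h.src1' hu hp x).mul (hV x)

lemma CoefBd.prod1 (h : CoefBd B φ φ1 φ2) (hu : ∀ x, |u x| ≤ 1/2)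
    (hp : ∀ x, HasDerivAt u (p x) x) (hy : ∀ x, HasDerivAt y (y1 x) x) (x : ℝ) :
    HasDerivAt (fun x => φ (u x) * y x) (φ1 (u x) * p x * y x + φ (u x) * y1 x) x :=
  (h.src1 hu hp x).mul (hy x)

lemma CoefBd.prod2 (h : CoefBd B φ φ1 φ2) (hu : ∀ x, |u x| ≤ 1/2)
    (hp : ∀ x, HasDerivAt u (p x) x) (hV : ∀ x, HasDerivAt p (V x) x)
    (hy : ∀ x, HasDerivAt y (y1 x) x) (hy1 : ∀ x, HasDerivAt y1 (y2 x) x) (x : ℝ) :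
    HasDerivAt (fun x => φ1 (u x) * p x * y x + φ (u x) * y1 x)
      (φ (u x) * y2 x + (2 * (φ1 (u x) * p x * y1 x)
        + (φ2 (u x) * p x * p x + φ1 (u x) * V x) * y x)) x := by
  have := ((h.src2 hu hp hV x).mul (hy x)).add (h.prod1 hu hp hy1 x)
  exact this.congr_deriv (by ring)
end calc1

section eqs
variable {α K a B : ℝ} {m m1 m2 n n1 n2 r r1 r2 f f1 f2 g g1 g2 : ℝ → ℝ}
  {v L : ℝ → ℝ → ℝ} {t : ℝ}

lemma eq_v0 (ha : a = α * (1 - 3 * K))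
    (C : Coefs a K B m m1 m2 n n1 n2 r r1 r2 f f1 f2 g g1 g2)
    (hsol : IsEulerSolution α K v L) (ht : 1 < t) (x : ℝ) :
    pderivT v t x = -(a / t) * v t x + t ^ (-α) * (-(m (v t x) * pderivX v t x)
      - K / (1 + K) * (n (v t x) * pderivX L t x) + f (v t x)) := by
  rw [(hsol t ht.le x).1, C.m_eq, C.n_eq, C.f_eq, ha]
  ring

lemma eq_L0 (ha : a = α * (1 - 3 * K))
    (C : Coefs a K B m m1 m2 n n1 n2 r r1 r2 f f1 f2 g g1 g2)
    (hsol : IsEulerSolution α K v L) (ht : 1 < t) (x : ℝ) :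
    pderivT L t x = t ^ (-α) * (-((1 + K) * (r (v t x) * pderivX v t x))
      - (m (v t x) * pderivX L t x) + g (v t x)) := by
  rw [(hsol t ht.le x).2, C.m_eq, C.r_eq, C.g_eq, ha]
  ring

lemma eq_v1 (ha : a = α * (1 - 3 * K))
    (C : Coefs a K B m m1 m2 n n1 n2 r r1 r2 f f1 f2 g g1 g2)
    (hsol : IsEulerSolution α K v L) (hv : SmH v) (hL : SmH L) (ht : 1 < t)
    (hs : ∀ x, |v t x| ≤ 1/2) (x : ℝ) :
    pderivT (pderivX v) t x = -(a / t) * pderivX v t x + t ^ (-α) *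
      (-(m1 (v t x) * pderivX v t x * pderivX v t x + m (v t x) * pderivX (pderivX v) t x)
      - K / (1 + K) * (n1 (v t x) * pderivX v t x * pderivX L t x
          + n (v t x) * pderivX (pderivX L) t x) + f1 (v t x) * pderivX v t x) := by
  have h := hv.hasDerivXT ht x
  have e : (fun y => pderivT v t y) = _ := funext fun y => eq_v0 ha C hsol ht y
  rw [e] at h
  have h0 := fun x => hv.hasDerivX ht.le x
  have h1 := fun x => hv.dX.hasDerivX ht.le x
  have l0 := fun x => hL.dX.hasDerivX ht.le x
  have h2 := ((h0 x).const_mul (-(a / t))).add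
    ((((C.cm.prod1 hs h0 h1 x).neg.sub ((C.cn.prod1 hs h0 l0 x).const_mul (K / (1 + K)))).add
      (C.cf.src1 hs h0 x)).const_mul (t ^ (-α)))
  exact h.unique h2

lemma eq_L1 (ha : a = α * (1 - 3 * K))
    (C : Coefs a K B m m1 m2 n n1 n2 r r1 r2 f f1 f2 g g1 g2)
    (hsol : IsEulerSolution α K v L) (hv : SmH v) (hL : SmH L) (ht : 1 < t)
    (hs : ∀ x, |v t x| ≤ 1/2) (x : ℝ) :
    pderivT (pderivX L) t x = t ^ (-α) *
      (-((1 + K) * (r1 (v t x) * pderivX v t x * pderivX v t x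
          + r (v t x) * pderivX (pderivX v) t x))
      - (m1 (v t x) * pderivX v t x * pderivX L t x
          + m (v t x) * pderivX (pderivX L) t x) + g1 (v t x) * pderivX v t x) := by
  have h := hL.hasDerivXT ht x
  have e : (fun y => pderivT L t y) = _ := funext fun y => eq_L0 ha C hsol ht y
  rw [e] at h
  have h0 := fun x => hv.hasDerivX ht.le x
  have h1 := fun x => hv.dX.hasDerivX ht.le x
  have l0 := fun x => hL.dX.hasDerivX ht.le x
  have h2 := 
    (((((C.cr.prod1 hs h0 h1 x).const_mul (1 + K)).neg.sub (C.cm.prod1 hs h0 l0 x)).add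
      (C.cg.src1 hs h0 x)).const_mul (t ^ (-α)))
  exact h.unique h2

lemma eq_v2 (ha : a = α * (1 - 3 * K))
    (C : Coefs a K B m m1 m2 n n1 n2 r r1 r2 f f1 f2 g g1 g2)
    (hsol : IsEulerSolution α K v L) (hv : SmH v) (hL : SmH L) (ht : 1 < t)
    (hs : ∀ x, |v t x| ≤ 1/2) (x : ℝ) :
    pderivT (pderivX (pderivX v)) t x = -(a / t) * pderivX (pderivX v) t x + t ^ (-α) *
      (-(m (v t x) * pderivX (pderivX (pderivX v)) t x
          + (2 * (m1 (v t x) * pderivX v t x * pderivX (pderivX v) t x)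
          + (m2 (v t x) * pderivX v t x * pderivX v t x
            + m1 (v t x) * pderivX (pderivX v) t x) * pderivX v t x))
      - K / (1 + K) * (n (v t x) * pderivX (pderivX (pderivX L)) t x
          + (2 * (n1 (v t x) * pderivX v t x * pderivX (pderivX L) t x)
          + (n2 (v t x) * pderivX v t x * pderivX v t x
            + n1 (v t x) * pderivX (pderivX v) t x) * pderivX L t x))
      + (f2 (v t x) * pderivX v t x * pderivX v t x + f1 (v t x) * pderivX (pderivX v) t x)) := by
  have h := hv.dX.hasDerivXT ht x
  have e : (fun y => pderivT (pderivX v) t y) = _ :=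
    funext fun y => eq_v1 ha C hsol hv hL ht hs y
  rw [e] at h
  have h0 := fun x => hv.hasDerivX ht.le x
  have h1 := fun x => hv.dX.hasDerivX ht.le x
  have h1' := fun x => hv.dX.dX.hasDerivX ht.le x
  have l0 := fun x => hL.dX.hasDerivX ht.le x
  have l1 := fun x => hL.dX.dX.hasDerivX ht.le x
  have h2 := ((h1 x).const_mul (-(a / t))).add
    ((((C.cm.prod2 hs h0 h1 h1 h1' x).neg.sub
      ((C.cn.prod2 hs h0 h1 l0 l1 x).const_mul (K / (1 + K)))).add
      (C.cf.src2 hs h0 h1 x)).const_mul (t ^ (-α)))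
  exact h.unique h2

lemma eq_L2 (ha : a = α * (1 - 3 * K))
    (C : Coefs a K B m m1 m2 n n1 n2 r r1 r2 f f1 f2 g g1 g2)
    (hsol : IsEulerSolution α K v L) (hv : SmH v) (hL : SmH L) (ht : 1 < t)
    (hs : ∀ x, |v t x| ≤ 1/2) (x : ℝ) :
    pderivT (pderivX (pderivX L)) t x = t ^ (-α) *
      (-((1 + K) * (r (v t x) * pderivX (pderivX (pderivX v)) t x
          + (2 * (r1 (v t x) * pderivX v t x * pderivX (pderivX v) t x)
          + (r2 (v t x) * pderivX v t x * pderivX v t x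
            + r1 (v t x) * pderivX (pderivX v) t x) * pderivX v t x)))
      - (m (v t x) * pderivX (pderivX (pderivX L)) t x
          + (2 * (m1 (v t x) * pderivX v t x * pderivX (pderivX L) t x)
          + (m2 (v t x) * pderivX v t x * pderivX v t x
            + m1 (v t x) * pderivX (pderivX v) t x) * pderivX L t x))
      + (g2 (v t x) * pderivX v t x * pderivX v t x + g1 (v t x) * pderivX (pderivX v) t x)) := by
  have h := hL.dX.hasDerivXT ht x
  have e : (fun y => pderivT (pderivX L) t y) = _ :=
    funext fun y => eq_L1 ha C hsol hv hL ht hs y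
  rw [e] at h
  have h0 := fun x => hv.hasDerivX ht.le x
  have h1 := fun x => hv.dX.hasDerivX ht.le x
  have h1' := fun x => hv.dX.dX.hasDerivX ht.le x
  have l0 := fun x => hL.dX.hasDerivX ht.le x
  have l1 := fun x => hL.dX.dX.hasDerivX ht.le x
  have h2 := 
    (((((C.cr.prod2 hs h0 h1 h1 h1' x).const_mul (1 + K)).neg.sub
      (C.cm.prod2 hs h0 h1 l0 l1 x)).add
      (C.cg.src2 hs h0 h1 x)).const_mul (t ^ (-α)))
  exact h.unique h2
end eqs


lemma int_le_of_flux {h F F' : ℝ → ℝ} (hh : Continuous h) (hF : ∀ x, HasDerivAt F (F' x) x)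
    (hper : F (2 * Real.pi) = F 0) (hle : ∀ x, h x ≤ F' x) :
    ∫ x in (0:ℝ)..(2 * Real.pi), h x ≤ 0 := by
  have hpi : (0:ℝ) ≤ 2 * Real.pi := by positivity
  have := intervalIntegral.integral_le_sub_of_hasDeriv_right_of_le hpi
    (fun x _ => (hF x).continuousAt.continuousWithinAt)
    (fun x _ => (hF x).hasDerivWithinAt) (φ := h)
    hh.continuousOn.integrableOn_Icc (fun x _ => hle x)
  rw [hper, sub_self] at this
  exact this

/-- Energy density. -/
noncomputable def eD (A : ℝ) (v L : ℝ → ℝ → ℝ) (t x : ℝ) : ℝ :=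
  A * pderivX v t x ^ 2 + pderivX L t x ^ 2 + A * pderivX (pderivX v) t x ^ 2
    + (1 - v t x ^ 2) ^ 2 * pderivX (pderivX L) t x ^ 2

/-- Corrector density. -/
noncomputable def gD (v L : ℝ → ℝ → ℝ) (t x : ℝ) : ℝ :=
  v t x * pderivX L t x - pderivX (pderivX v) t x * pderivX L t x

/-- Sum of squares. -/
noncomputable def R2 (v L : ℝ → ℝ → ℝ) (t x : ℝ) : ℝ :=
  v t x ^ 2 + pderivX v t x ^ 2 + pderivX L t x ^ 2 + pderivX (pderivX v) t x ^ 2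
    + pderivX (pderivX L) t x ^ 2

lemma R2_nonneg (v L : ℝ → ℝ → ℝ) (t x : ℝ) : 0 ≤ R2 v L t x := by
  unfold R2; positivity

lemma SmH.mul {F G : ℝ → ℝ → ℝ} (hF : SmH F) (hG : SmH G) : SmH (fun t x => F t x * G t x) :=
  ContDiffOn.mul hF hG
lemma SmH.add {F G : ℝ → ℝ → ℝ} (hF : SmH F) (hG : SmH G) : SmH (fun t x => F t x + G t x) :=
  ContDiffOn.add hF hG
lemma SmH.sub {F G : ℝ → ℝ → ℝ} (hF : SmH F) (hG : SmH G) : SmH (fun t x => F t x - G t x) :=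
  ContDiffOn.sub hF hG
lemma SmH.pow {F : ℝ → ℝ → ℝ} (hF : SmH F) (n : ℕ) : SmH (fun t x => F t x ^ n) :=
  ContDiffOn.pow hF n
lemma SmH.const (c : ℝ) : SmH (fun _ _ => c) := contDiffOn_const

lemma SmH.eD {v L : ℝ → ℝ → ℝ} (hv : SmH v) (hL : SmH L) (A : ℝ) : SmH (eD A v L) :=
  ((((SmH.const A).mul (hv.dX.pow 2)).add (hL.dX.pow 2)).add
    ((SmH.const A).mul (hv.dX.dX.pow 2))).add
    ((((SmH.const 1).sub (hv.pow 2)).pow 2).mul (hL.dX.dX.pow 2))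

lemma SmH.gD {v L : ℝ → ℝ → ℝ} (hv : SmH v) (hL : SmH L) : SmH (gD v L) :=
  (hv.mul hL.dX).sub (hv.dX.dX.mul hL.dX)

lemma SmH.R2 {v L : ℝ → ℝ → ℝ} (hv : SmH v) (hL : SmH L) : SmH (R2 v L) :=
  ((((hv.pow 2).add (hv.dX.pow 2)).add (hL.dX.pow 2)).add (hv.dX.dX.pow 2)).add (hL.dX.dX.pow 2)

lemma pderivT_eD {v L : ℝ → ℝ → ℝ} (hv : SmH v) (hL : SmH L) (A : ℝ) {t : ℝ} (ht : 1 < t) (x : ℝ) :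
    pderivT (eD A v L) t x = 2 * A * pderivX v t x * pderivT (pderivX v) t x
      + 2 * pderivX L t x * pderivT (pderivX L) t x
      + 2 * A * pderivX (pderivX v) t x * pderivT (pderivX (pderivX v)) t x
      + 2 * (1 - v t x ^ 2) ^ 2 * pderivX (pderivX L) t x * pderivT (pderivX (pderivX L)) t x
      + (-4 * v t x * (1 - v t x ^ 2)) * pderivT v t x * pderivX (pderivX L) t x ^ 2 := by
  have h0 := hv.hasDerivT ht x
  have h1 := hv.dX.hasDerivT ht x
  have h2 := hv.dX.dX.hasDerivT ht x
  have l1 := hL.dX.hasDerivT ht x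
  have l2 := hL.dX.dX.hasDerivT ht x
  have h := ((((h1.pow 2).const_mul A).add (l1.pow 2)).add ((h2.pow 2).const_mul A)).add
    ((((h0.pow 2).const_sub 1).pow 2).mul (l2.pow 2))
  refine Eq.trans (HasDerivAt.deriv h) ?_
  simp
  ring

lemma pderivT_gD {v L : ℝ → ℝ → ℝ} (hv : SmH v) (hL : SmH L) {t : ℝ} (ht : 1 < t) (x : ℝ) :
    pderivT (gD v L) t x = pderivT v t x * pderivX L t x + v t x * pderivT (pderivX L) t x
      - (pderivT (pderivX (pderivX v)) t x * pderivX L t x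
        + pderivX (pderivX v) t x * pderivT (pderivX L) t x) := by
  have h0 := hv.hasDerivT ht x
  have h2 := hv.dX.dX.hasDerivT ht x
  have l1 := hL.dX.hasDerivT ht x
  exact HasDerivAt.deriv ((h0.mul l1).sub (h2.mul l1))

/-- periodicity passes to x-derivatives -/
lemma per_dX {F : ℝ → ℝ → ℝ} (h : ∀ t x, F t (x + 2 * Real.pi) = F t x) :
    ∀ t x, pderivX F t (x + 2 * Real.pi) = pderivX F t x := by
  intro t x
  have e : (fun y => F t y) = fun y => F t (y + 2 * Real.pi) := funext fun y => (h t y).symm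
  unfold pderivX
  conv_rhs => rw [e]
  rw [deriv_comp_add_const (fun y => F t y)]

lemma per_0 {F : ℝ → ℝ → ℝ} (h : ∀ t x, F t (x + 2 * Real.pi) = F t x) (t : ℝ) :
    F t (2 * Real.pi) = F t 0 := by
  have := h t 0
  rwa [zero_add] at this

section est
variable {α K a B : ℝ} {m m1 m2 n n1 n2 r r1 r2 f f1 f2 g g1 g2 : ℝ → ℝ}
  {v L : ℝ → ℝ → ℝ} {t s : ℝ}

lemma le_sqrt_R2 (v L : ℝ → ℝ → ℝ) (t x : ℝ) :
    |v t x| ≤ √(R2 v L t x) ∧ |pderivX v t x| ≤ √(R2 v L t x) ∧ |pderivX L t x| ≤ √(R2 v L t x)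
    ∧ |pderivX (pderivX v) t x| ≤ √(R2 v L t x) ∧ |pderivX (pderivX L) t x| ≤ √(R2 v L t x) := by
  refine ⟨?_, ?_, ?_, ?_, ?_⟩ <;> apply Real.abs_le_sqrt <;> unfold R2 <;>
    nlinarith [sq_nonneg (v t x), sq_nonneg (pderivX v t x), sq_nonneg (pderivX L t x),
      sq_nonneg (pderivX (pderivX v) t x), sq_nonneg (pderivX (pderivX L) t x)]

/-- coefficient bounds at a point -/
lemma Coefs.bounds (C : Coefs a K B m m1 m2 n n1 n2 r r1 r2 f f1 f2 g g1 g2)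
    {u s : ℝ} (hs : s ≤ 1/2) (hu : |u| ≤ s) :
    |m u| ≤ B * s ∧ |n u - 1| ≤ B * s ∧ |r u - 1| ≤ B * s ∧ |f1 u| ≤ B * s ∧ |g1 u| ≤ B * s
      ∧ |f u| ≤ B * s * |u| := by
  have hB : 0 ≤ B := by linarith [C.B1]
  have hu2 : |u| ≤ 1/2 := hu.trans hs
  have hBu : B * |u| ≤ B * s := mul_le_mul_of_nonneg_left hu hB
  have e1 := C.cm.lip hu2
  have e2 := C.cn.lip hu2
  have e3 := C.cr.lip hu2
  have e4 := C.cf.lip1 hu2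
  have e5 := C.cg.lip1 hu2
  rw [C.m_eq 0] at e1
  rw [C.n_eq 0] at e2
  rw [C.r_eq 0] at e3
  rw [C.f10] at e4
  rw [C.g10] at e5
  norm_num at e1 e2 e3 e4 e5
  have e6 := C.cf.quad hB (by rw [C.f_eq]; simp) C.f10 hu2
  exact ⟨e1.trans hBu, e2.trans hBu, e3.trans hBu, e4.trans hBu, e5.trans hBu,
    e6.trans (mul_le_mul_of_nonneg_right hBu (abs_nonneg _))⟩

lemma w_bounds {u s : ℝ} (hs : s ≤ 1/2) (hu : |u| ≤ s) :
    0 ≤ (1 - u ^ 2) ^ 2 ∧ (1 - u ^ 2) ^ 2 ≤ 1 ∧ |-4 * u * (1 - u ^ 2)| ≤ 4 * s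
      ∧ 1 / 2 ≤ (1 - u ^ 2) ^ 2 := by
  have hu2 : u ^ 2 ≤ 1 / 4 := by
    have := abs_le.1 (hu.trans hs)
    nlinarith [this.1, this.2]
  have h0 := sq_nonneg u
  refine ⟨sq_nonneg _, by nlinarith, ?_, by nlinarith⟩
  have h1 : |1 - u ^ 2| ≤ 1 := abs_le.2 ⟨by linarith, by linarith⟩
  have h2 : |-4 * u| ≤ 4 * s := by
    rw [abs_mul]; norm_num; exact hu
  have := mul_bd h2 h1
  linarith

lemma hd_w {u p : ℝ → ℝ} (hp : ∀ x, HasDerivAt u (p x) x) (x : ℝ) :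
    HasDerivAt (fun x => (1 - u x ^ 2) ^ 2) ((-4 * u x * (1 - u x ^ 2)) * p x) x := by
  have := (((hp x).pow 2).const_sub 1).pow 2
  refine this.congr_deriv ?_
  simp
  ring

end est


section est2
variable {α K a A B : ℝ} {m m1 m2 n n1 n2 r r1 r2 f f1 f2 g g1 g2 : ℝ → ℝ}
  {v L : ℝ → ℝ → ℝ} {t s : ℝ}

lemma energy_int (hK0 : 0 < K) (hK3 : K < 1/3) (ha : a = α * (1 - 3 * K)) (hA : A = (1 + K) ^ 2 / K)
    (hAB : A ≤ B)
    (C : Coefs a K B m m1 m2 n n1 n2 r r1 r2 f f1 f2 g g1 g2)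
    (hsol : IsEulerSolution α K v L) (hv : SmH v) (hL : SmH L)
    (pv : ∀ t x, v t (x + 2 * Real.pi) = v t x) (pL : ∀ t x, L t (x + 2 * Real.pi) = L t x)
    (ht : 1 < t) (hd0 : 0 ≤ a / t) (hdT : a / t ≤ t ^ (-α))
    (hs0 : 0 ≤ s) (hs : s ≤ 1 / 2)
    (hvs : ∀ x, |v t x| ≤ s) (hps : ∀ x, |pderivX v t x| ≤ s) (hqs : ∀ x, |pderivX L t x| ≤ s) :
    ∫ x in (0:ℝ)..(2 * Real.pi), pderivT (eD A v L) t x ≤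
      -2 * (a / t) * A * ((∫ x in (0:ℝ)..(2 * Real.pi), pderivX v t x ^ 2)
        + ∫ x in (0:ℝ)..(2 * Real.pi), pderivX (pderivX v) t x ^ 2)
      + 1000 * B ^ 2 * t ^ (-α) * s * ∫ x in (0:ℝ)..(2 * Real.pi), R2 v L t x := by
  have hu : ∀ x, |v t x| ≤ 1/2 := fun x => (hvs x).trans hs
  have h0 := fun x => hv.hasDerivX ht.le x
  have h1 := fun x => hv.dX.hasDerivX ht.le x
  have h2 := fun x => hv.dX.dX.hasDerivX ht.le x
  have l0 := fun x => hL.dX.hasDerivX ht.le x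
  have l1 := fun x => hL.dX.dX.hasDerivX ht.le x
  have ce := (hv.eD hL A).contT' ht
  have cp := hv.dX.cont ht.le
  have cV := hv.dX.dX.cont ht.le
  have cR := (hv.R2 hL).cont ht.le
  have hAk : A * (K / (1 + K)) = 1 + K := by
    rw [hA]; field_simp
  have hA0 : 0 ≤ A := by rw [hA]; positivity
  have hk1 : K / (1 + K) ≤ 1 := by
    rw [div_le_one (by linarith)]; linarith
  have hT : 0 ≤ t ^ (-α) := by positivity
  have key := int_le_of_flux
    (h := fun x => pderivT (eD A v L) t x
      + 2 * (a / t) * A * (pderivX v t x ^ 2 + pderivX (pderivX v) t x ^ 2)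
      - 1000 * B ^ 2 * t ^ (-α) * s * R2 v L t x)
    (F := fun x => t ^ (-α) * (-2 * (1 + K) * (pderivX v t x * pderivX L t x)
      - A * (m (v t x) * pderivX (pderivX v) t x ^ 2)
      - m (v t x) * (1 - v t x ^ 2) ^ 2 * pderivX (pderivX L) t x ^ 2
      - 2 * (1 + K) * (n (v t x) * pderivX (pderivX v) t x * pderivX (pderivX L) t x)))
    (F' := _) (by fun_prop)
    (fun x => ((((((h1 x).mul (l0 x)).const_mul (-2 * (1 + K))).sub
      (((C.cm.src1 hu h0 x).mul ((h2 x).pow 2)).const_mul A)).sub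
      (((C.cm.src1 hu h0 x).mul (hd_w h0 x)).mul ((l1 x).pow 2))).sub
      ((((C.cn.src1 hu h0 x).mul (h2 x)).mul (l1 x)).const_mul (2 * (1 + K)))).const_mul
        (t ^ (-α)))
    (by
      simp only [per_0 pv, per_0 (per_dX pv), per_0 (per_dX (per_dX pv)), per_0 (per_dX pL),
        per_0 (per_dX (per_dX pL))])
    (by
      intro x
      obtain ⟨b0, b1, b2, b3, b4⟩ := le_sqrt_R2 v L t x
      obtain ⟨c1, c2, c3, c4, c5, c6⟩ := C.bounds hs (hvs x)
      obtain ⟨w0, w1, w2, w3⟩ := w_bounds hs (hvs x)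
      have hs1 : s ≤ 1 := by linarith
      have hB := C.B1
      have hk0 : 0 ≤ K / (1 + K) := by positivity
      have hBs : 0 ≤ B * s := by positivity
      have hρv := rho_v_bd (R := s) hk0 hk1 c1 c2
        (c6.trans (mul_le_mul_of_nonneg_left (hvs x) hBs)) (hps x) (hqs x)
      have hρp := rho_p_bd hk0 hk1 c1 c2 (C.cm.b1 _ (hu x)) (C.cn.b1 _ (hu x)) c4 (hps x)
        b1 b2 b3 b4
      have hρq := rho_q_bd (K := K) (by linarith) (by linarith) c1 c3 (C.cm.b1 _ (hu x))
        (C.cr.b1 _ (hu x)) c5 (hps x) b1 b2 b3 b4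
      have hρV := rho_V_bd hk0 hk1 hs1 (C.cm.b1 _ (hu x)) (C.cm.b2 _ (hu x))
        (C.cn.b1 _ (hu x)) (C.cn.b2 _ (hu x)) c4 (C.cf.b2 _ (hu x)) (hps x) (hqs x) b1 b3 b4
      have hρΛ := rho_L_bd (K := K) (by linarith) (by linarith) hs1 (C.cm.b1 _ (hu x))
        (C.cm.b2 _ (hu x)) (C.cr.b1 _ (hu x)) (C.cr.b2 _ (hu x)) c5 (C.cg.b2 _ (hu x))
        (hps x) (hqs x) b1 b3 b4
      have hwr : (1 - v t x ^ 2) ^ 2 * r (v t x) = n (v t x) := by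
        rw [C.r_eq, C.n_eq]; ring
      have hρv' := hρv.trans (mul_le_mul_of_nonneg_left (by linarith : s ≤ 3)
        (by positivity : 0 ≤ 14 * B * s))
      have main := energy_point (P3 := pderivX (pderivX (pderivX v)) t x)
        (Q3 := pderivX (pderivX (pderivX L)) t x) (K := K) hB hs0 hs (Real.sqrt_nonneg _) hk0 hk1
        hK0.le (by linarith) hA0 hAB hAk hT hd0 hdT c1 (C.cm.b1 _ (hu x)) (C.cn.b1 _ (hu x)) w0 w1 w2
        hwr (hvs x) (hps x) (hqs x) b0 b1 b2 b3 b4 hρv' hρp hρq hρV hρΛ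
      rw [Real.sq_sqrt (R2_nonneg _ _ _ _)] at main
      rw [pderivT_eD hv hL A ht x, eq_v0 ha C hsol ht x, eq_v1 ha C hsol hv hL ht hu x,
        eq_v2 ha C hsol hv hL ht hu x, eq_L1 ha C hsol hv hL ht hu x,
        eq_L2 ha C hsol hv hL ht hu x]
      simp only [Pi.mul_apply, Pi.pow_apply, Nat.cast_ofNat, Nat.add_one_sub_one, pow_one]
      clear * - main
      linear_combination main)
  have split : (∫ x in (0:ℝ)..(2 * Real.pi), (pderivT (eD A v L) t x
      + 2 * (a / t) * A * (pderivX v t x ^ 2 + pderivX (pderivX v) t x ^ 2)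
      - 1000 * B ^ 2 * t ^ (-α) * s * R2 v L t x)) =
      (∫ x in (0:ℝ)..(2 * Real.pi), pderivT (eD A v L) t x)
      + 2 * (a / t) * A * ((∫ x in (0:ℝ)..(2 * Real.pi), pderivX v t x ^ 2)
        + ∫ x in (0:ℝ)..(2 * Real.pi), pderivX (pderivX v) t x ^ 2)
      - 1000 * B ^ 2 * t ^ (-α) * s * ∫ x in (0:ℝ)..(2 * Real.pi), R2 v L t x := by
    rw [intervalIntegral.integral_sub, intervalIntegral.integral_add,
      intervalIntegral.integral_const_mul, intervalIntegral.integral_const_mul,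
      intervalIntegral.integral_add]
    all_goals exact Continuous.intervalIntegrable (by fun_prop) _ _
  rw [split] at key
  linarith

lemma corr_int (hK0 : 0 < K) (hK3 : K < 1/3) (ha : a = α * (1 - 3 * K))
    (C : Coefs a K B m m1 m2 n n1 n2 r r1 r2 f f1 f2 g g1 g2)
    (hsol : IsEulerSolution α K v L) (hv : SmH v) (hL : SmH L)
    (pv : ∀ t x, v t (x + 2 * Real.pi) = v t x) (pL : ∀ t x, L t (x + 2 * Real.pi) = L t x)
    (ht : 1 < t) 
    (hs0 : 0 ≤ s) (hs : s ≤ 1 / 2)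
    (hvs : ∀ x, |v t x| ≤ s) (hps : ∀ x, |pderivX v t x| ≤ s) (hqs : ∀ x, |pderivX L t x| ≤ s) :
    ∫ x in (0:ℝ)..(2 * Real.pi), pderivT (gD v L) t x ≤
      -(a / t) * (∫ x in (0:ℝ)..(2 * Real.pi), gD v L t x)
      + t ^ (-α) * ((1 + K) * ((∫ x in (0:ℝ)..(2 * Real.pi), pderivX v t x ^ 2)
        + ∫ x in (0:ℝ)..(2 * Real.pi), pderivX (pderivX v) t x ^ 2)
        - K / (1 + K) * ((∫ x in (0:ℝ)..(2 * Real.pi), pderivX L t x ^ 2)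
        + ∫ x in (0:ℝ)..(2 * Real.pi), pderivX (pderivX L) t x ^ 2))
      + 1000 * B ^ 2 * t ^ (-α) * s * ∫ x in (0:ℝ)..(2 * Real.pi), R2 v L t x := by
  have hu : ∀ x, |v t x| ≤ 1/2 := fun x => (hvs x).trans hs
  have h0 := fun x => hv.hasDerivX ht.le x
  have h1 := fun x => hv.dX.hasDerivX ht.le x
  have h2 := fun x => hv.dX.dX.hasDerivX ht.le x
  have l0 := fun x => hL.dX.hasDerivX ht.le x
  have l1 := fun x => hL.dX.dX.hasDerivX ht.le x
  have ce := (hv.gD hL).contT' ht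
  have cg := (hv.gD hL).cont ht.le
  have cp := hv.dX.cont ht.le
  have cV := hv.dX.dX.cont ht.le
  have cq := hL.dX.cont ht.le
  have cΛ := hL.dX.dX.cont ht.le
  have cR := (hv.R2 hL).cont ht.le
  have hk1 : K / (1 + K) ≤ 1 := by
    rw [div_le_one (by linarith)]; linarith
  have hT : 0 ≤ t ^ (-α) := by positivity
  have key := int_le_of_flux
    (h := fun x => pderivT (gD v L) t x + (a / t) * gD v L t x
      - t ^ (-α) * ((1 + K) * (pderivX v t x ^ 2 + pderivX (pderivX v) t x ^ 2)
        - K / (1 + K) * (pderivX L t x ^ 2 + pderivX (pderivX L) t x ^ 2))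
      - 1000 * B ^ 2 * t ^ (-α) * s * R2 v L t x)
    (F := fun x => t ^ (-α) * (-(1 + K) * (v t x * pderivX v t x)
      + m (v t x) * (pderivX (pderivX v) t x * pderivX L t x)
      + K / (1 + K) * (n (v t x) * (pderivX (pderivX L) t x * pderivX L t x))))
    (F' := _) (by fun_prop)
    (fun x => (((((h0 x).mul (h1 x)).const_mul (-(1 + K))).add
      ((C.cm.src1 hu h0 x).mul ((h2 x).mul (l0 x)))).add
      (((C.cn.src1 hu h0 x).mul ((l1 x).mul (l0 x))).const_mul (K / (1 + K)))).const_mul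
        (t ^ (-α)))
    (by
      simp only [per_0 pv, per_0 (per_dX pv), per_0 (per_dX (per_dX pv)), per_0 (per_dX pL),
        per_0 (per_dX (per_dX pL))])
    (by
      intro x
      obtain ⟨b0, b1, b2, b3, b4⟩ := le_sqrt_R2 v L t x
      obtain ⟨c1, c2, c3, c4, c5, c6⟩ := C.bounds hs (hvs x)
      have hs1 : s ≤ 1 := by linarith
      have hB := C.B1
      have hk0 : 0 ≤ K / (1 + K) := by positivity
      have hBs : 0 ≤ B * s := by positivity
      have hρv := rho_v_bd hk0 hk1 c1 c2
        (c6.trans (mul_le_mul_of_nonneg_left b0 hBs)) b1 b2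
      have hρq := rho_q_bd (K := K) (by linarith) (by linarith) c1 c3 (C.cm.b1 _ (hu x))
        (C.cr.b1 _ (hu x)) c5 (hps x) b1 b2 b3 b4
      have hρV := rho_V_bd hk0 hk1 hs1 (C.cm.b1 _ (hu x)) (C.cm.b2 _ (hu x))
        (C.cn.b1 _ (hu x)) (C.cn.b2 _ (hu x)) c4 (C.cf.b2 _ (hu x)) (hps x) (hqs x) b1 b3 b4
      have main := corr_point (P3 := pderivX (pderivX (pderivX v)) t x)
        (Q3 := pderivX (pderivX (pderivX L)) t x) (K := K) (d := a / t) hB hs0 hk0 hk1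
        hT c1 (C.cm.b1 _ (hu x)) (C.cn.b1 _ (hu x)) c2
        (hps x) b0 b2 b3 b4 hρv hρq hρV
      rw [Real.sq_sqrt (R2_nonneg _ _ _ _)] at main
      rw [pderivT_gD hv hL ht x, eq_v0 ha C hsol ht x, 
        eq_v2 ha C hsol hv hL ht hu x, eq_L1 ha C hsol hv hL ht hu x, gD]
      simp only [Pi.mul_apply, Pi.pow_apply, Nat.cast_ofNat, Nat.add_one_sub_one, pow_one]
      clear * - main
      linear_combination main)
  have split : (∫ x in (0:ℝ)..(2 * Real.pi), (pderivT (gD v L) t x + (a / t) * gD v L t x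
      - t ^ (-α) * ((1 + K) * (pderivX v t x ^ 2 + pderivX (pderivX v) t x ^ 2)
        - K / (1 + K) * (pderivX L t x ^ 2 + pderivX (pderivX L) t x ^ 2))
      - 1000 * B ^ 2 * t ^ (-α) * s * R2 v L t x)) =
      (∫ x in (0:ℝ)..(2 * Real.pi), pderivT (gD v L) t x)
      + (a / t) * (∫ x in (0:ℝ)..(2 * Real.pi), gD v L t x)
      - t ^ (-α) * ((1 + K) * ((∫ x in (0:ℝ)..(2 * Real.pi), pderivX v t x ^ 2)
        + ∫ x in (0:ℝ)..(2 * Real.pi), pderivX (pderivX v) t x ^ 2)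
        - K / (1 + K) * ((∫ x in (0:ℝ)..(2 * Real.pi), pderivX L t x ^ 2)
        + ∫ x in (0:ℝ)..(2 * Real.pi), pderivX (pderivX L) t x ^ 2))
      - 1000 * B ^ 2 * t ^ (-α) * s * ∫ x in (0:ℝ)..(2 * Real.pi), R2 v L t x := by
    rw [intervalIntegral.integral_sub, intervalIntegral.integral_sub,
      intervalIntegral.integral_add,
      intervalIntegral.integral_const_mul, intervalIntegral.integral_const_mul,
      intervalIntegral.integral_const_mul, intervalIntegral.integral_sub,
      intervalIntegral.integral_const_mul, intervalIntegral.integral_const_mul,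
      intervalIntegral.integral_add, intervalIntegral.integral_add]
    all_goals exact Continuous.intervalIntegrable (by fun_prop) _ _
  rw [split] at key
  linarith

lemma mean_int (hK0 : 0 < K) (ha : a = α * (1 - 3 * K))
    (C : Coefs a K B m m1 m2 n n1 n2 r r1 r2 f f1 f2 g g1 g2)
    (hsol : IsEulerSolution α K v L) (hv : SmH v) (hL : SmH L)
    (pL : ∀ t x, L t (x + 2 * Real.pi) = L t x)
    (ht : 1 < t) 
    (hs0 : 0 ≤ s) (hs : s ≤ 1 / 2)
    (hvs : ∀ x, |v t x| ≤ s)  :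
    meanVel v t * ∫ x in (0:ℝ)..(2 * Real.pi), pderivT v t x ≤
      -(a / t) * meanVel v t ^ 2
      + 14 * B * t ^ (-α) * s * ((∫ x in (0:ℝ)..(2 * Real.pi), R2 v L t x)
        + 2 * Real.pi * meanVel v t ^ 2) := by
  have ce := hv.contT' ht
  have cv := hv.cont ht.le
  have cR := (hv.R2 hL).cont ht.le
  have l := fun x => hL.hasDerivX ht.le x
  have hk1 : K / (1 + K) ≤ 1 := by
    rw [div_le_one (by linarith)]; linarith
  have hT : 0 ≤ t ^ (-α) := by positivity
  set z := meanVel v t with hz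
  have key := int_le_of_flux
    (h := fun x => z * (pderivT v t x + (a / t) * v t x)
      - 14 * B * t ^ (-α) * s * (R2 v L t x + z ^ 2))
    (F := fun x => (-(t ^ (-α) * (K / (1 + K)) * z)) * L t x)
    (F' := _) (by fun_prop)
    (fun x => (l x).const_mul _)
    (by simp only [per_0 pL])
    (by
      intro x
      obtain ⟨b0, b1, b2, b3, b4⟩ := le_sqrt_R2 v L t x
      obtain ⟨c1, c2, c3, c4, c5, c6⟩ := C.bounds hs (hvs x)
      have hB := C.B1
      have hk0 : 0 ≤ K / (1 + K) := by positivity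
      have hBs : 0 ≤ B * s := by positivity
      have hρv := rho_v_bd hk0 hk1 c1 c2
        (c6.trans (mul_le_mul_of_nonneg_left b0 hBs)) b1 b2
      have e := mul_bd (le_refl |z|) hρv
      have e2 : |z| * (14 * B * s * √(R2 v L t x)) ≤ 14 * B * s * (R2 v L t x + z ^ 2) := by
        have q1 := Real.sq_sqrt (R2_nonneg v L t x)
        have q2 := sq_abs z
        have q3 : |z| * √(R2 v L t x) ≤ R2 v L t x + z ^ 2 := by
          nlinarith [sq_nonneg (|z| - √(R2 v L t x)), R2_nonneg v L t x, sq_nonneg z]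
        have := mul_le_mul_of_nonneg_left q3 (by positivity : 0 ≤ 14 * B * s)
        linarith
      have e3 := mul_le_mul_of_nonneg_left ((le_abs_self _).trans (e.trans e2)) hT
      rw [eq_v0 ha C hsol ht x]
      clear * - e3
      linear_combination e3)
  have split : (∫ x in (0:ℝ)..(2 * Real.pi), (z * (pderivT v t x + (a / t) * v t x)
      - 14 * B * t ^ (-α) * s * (R2 v L t x + z ^ 2))) =
      z * ((∫ x in (0:ℝ)..(2 * Real.pi), pderivT v t x) + (a / t) * z)
      - 14 * B * t ^ (-α) * s * ((∫ x in (0:ℝ)..(2 * Real.pi), R2 v L t x)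
        + 2 * Real.pi * z ^ 2) := by
    rw [intervalIntegral.integral_sub, intervalIntegral.integral_const_mul,
      intervalIntegral.integral_add, intervalIntegral.integral_const_mul,
      intervalIntegral.integral_const_mul, intervalIntegral.integral_add,
      intervalIntegral.integral_const]
    · simp [hz, meanVel]
    all_goals exact Continuous.intervalIntegrable (by fun_prop) _ _
  rw [split] at key
  linarith
end est2


lemma cs_aux {h : ℝ → ℝ} (hc : Continuous h) :
    (∫ x in (0:ℝ)..(2 * Real.pi), |h x|) ^ 2 ≤
      2 * Real.pi * ∫ x in (0:ℝ)..(2 * Real.pi), h x ^ 2 := by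
  set I := ∫ x in (0:ℝ)..(2 * Real.pi), |h x| with hI
  have hpi := Real.pi_pos
  have h1 : 0 ≤ ∫ x in (0:ℝ)..(2 * Real.pi), (2 * Real.pi * |h x| - I) ^ 2 :=
    intervalIntegral.integral_nonneg (by positivity) (fun x _ => sq_nonneg _)
  have h2 : (∫ x in (0:ℝ)..(2 * Real.pi), (2 * Real.pi * |h x| - I) ^ 2) =
      (2 * Real.pi) ^ 2 * (∫ x in (0:ℝ)..(2 * Real.pi), h x ^ 2)
        - (4 * Real.pi * I) * I + 2 * Real.pi * I ^ 2 := by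
    have : ∀ x, (2 * Real.pi * |h x| - I) ^ 2 =
        (2 * Real.pi) ^ 2 * h x ^ 2 - (4 * Real.pi * I) * |h x| + I ^ 2 := by
      intro x
      rw [← sq_abs (h x)]; ring
    simp_rw [this]
    rw [intervalIntegral.integral_add, intervalIntegral.integral_sub,
      intervalIntegral.integral_const_mul, intervalIntegral.integral_const_mul,
      intervalIntegral.integral_const]
    · simp [hI]
    all_goals exact Continuous.intervalIntegrable (by fun_prop) _ _
  rw [h2] at h1
  have h3 : 0 ≤ (2 * Real.pi) * (2 * Real.pi * (∫ x in (0:ℝ)..(2 * Real.pi), h x ^ 2) - I ^ 2) := by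
    linarith
  have := nonneg_of_mul_nonneg_right h3 (by positivity)
  linarith

lemma sobolev_aux {h h' : ℝ → ℝ} (hd : ∀ x, HasDerivAt h (h' x) x) (hc : Continuous h')
    (hper : ∀ x, h (x + 2 * Real.pi) = h x) (x : ℝ) :
    h x ^ 2 ≤ 2 * (∫ x in (0:ℝ)..(2 * Real.pi), h x) ^ 2
      + 16 * ∫ x in (0:ℝ)..(2 * Real.pi), h' x ^ 2 := by
  have hpi := Real.pi_pos
  have hpi3 := Real.pi_gt_three
  have hpi4 := Real.pi_le_four
  have hcont : Continuous h := continuous_iff_continuousAt.2 fun x => (hd x).continuousAt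
  have hcs := cs_aux hc
  set I := ∫ x in (0:ℝ)..(2 * Real.pi), |h' x| with hI
  set J := ∫ x in (0:ℝ)..(2 * Real.pi), h' x ^ 2 with hJ
  set z := ∫ x in (0:ℝ)..(2 * Real.pi), h x with hz
  have hJ0 : 0 ≤ J := intervalIntegral.integral_nonneg (by positivity) (fun x _ => sq_nonneg _)
  have hI0 : 0 ≤ I := intervalIntegral.integral_nonneg (by positivity) (fun x _ => abs_nonneg _)
  have diff1 : ∀ y z : ℝ, 0 ≤ y → y ≤ z → z ≤ 2 * Real.pi → |h z - h y| ≤ I := by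
    intro y z hy hyz hz
    rw [← intervalIntegral.integral_eq_sub_of_hasDerivAt (fun x _ => hd x)
      (hc.intervalIntegrable _ _)]
    refine (intervalIntegral.abs_integral_le_integral_abs hyz).trans ?_
    refine intervalIntegral.integral_mono_interval hy hyz hz ?_ (hc.abs.intervalIntegrable _ _)
    exact Filter.Eventually.of_forall fun x => abs_nonneg _
  have diff : ∀ y z : ℝ, 0 ≤ y → y ≤ 2 * Real.pi → 0 ≤ z → z ≤ 2 * Real.pi → |h z - h y| ≤ I := by
    intro y z hy hy2 hz hz2
    rcases le_total y z with h1 | h1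
    · exact diff1 y z hy h1 hz2
    · rw [abs_sub_comm]; exact diff1 z y hz h1 hy2
  obtain ⟨x', hx', hxx⟩ := Function.Periodic.exists_mem_Ico₀ (f := h) hper (by positivity) x
  rw [hxx]
  have hx2 := hx'.2.le
  have up : 2 * Real.pi * h x' - z ≤ 2 * Real.pi * I := by
    have e : ∫ y in (0:ℝ)..(2 * Real.pi), (h x' - h y) ≤ ∫ y in (0:ℝ)..(2 * Real.pi), I := by
      refine intervalIntegral.integral_mono_on (by positivity)
        (Continuous.intervalIntegrable (by fun_prop) _ _) (by simp) ?_
      intro y hy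
      exact (le_abs_self _).trans (diff y x' hy.1 hy.2 hx'.1 hx2)
    rw [intervalIntegral.integral_sub (by simp) (hcont.intervalIntegrable _ _)] at e
    simpa using e
  have dn : -(2 * Real.pi * I) ≤ 2 * Real.pi * h x' - z := by
    have e : ∫ y in (0:ℝ)..(2 * Real.pi), (-I) ≤ ∫ y in (0:ℝ)..(2 * Real.pi), (h x' - h y) := by
      refine intervalIntegral.integral_mono_on (by positivity) (by simp)
        (Continuous.intervalIntegrable (by fun_prop) _ _) ?_
      intro y hy
      exact (abs_le.1 (diff y x' hy.1 hy.2 hx'.1 hx2)).1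
    rw [intervalIntegral.integral_sub (by simp) (hcont.intervalIntegrable _ _)] at e
    simpa using e
  have e1 : |2 * Real.pi * h x'| ≤ 2 * Real.pi * I + |z| := by
    have := abs_le.2 ⟨dn, up⟩
    calc |2 * Real.pi * h x'| = |(2 * Real.pi * h x' - z) + z| := by ring_nf
      _ ≤ _ := (abs_add_le _ _).trans (by linarith)
  have e2 : |h x'| ≤ I + |z| := by
    rw [abs_mul, abs_of_pos (by positivity : (0:ℝ) < 2 * Real.pi)] at e1
    have : 2 * Real.pi * |h x'| ≤ 2 * Real.pi * (I + |z|) := by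
      nlinarith [abs_nonneg z]
    exact le_of_mul_le_mul_left this (by positivity)
  have e3 : h x' ^ 2 ≤ (I + |z|) ^ 2 := by
    rw [← sq_abs]; exact pow_le_pow_left₀ (abs_nonneg _) e2 2
  have e4 : (I + |z|) ^ 2 ≤ 2 * I ^ 2 + 2 * z ^ 2 := by
    rw [← sq_abs z]; nlinarith [sq_nonneg (I - |z|)]
  have : Real.pi * J ≤ 4 * J := mul_le_mul_of_nonneg_right hpi4 hJ0
  linarith

/-- The corrected energy functional -/
noncomputable def Phi (α c M A : ℝ) (v L : ℝ → ℝ → ℝ) (t : ℝ) : ℝ :=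
  (1 + M * t ^ (α - 1)) * (meanVel v t ^ 2 + ∫ x in (0:ℝ)..(2 * Real.pi), eD A v L t x)
    + c * t ^ (α - 1) * ∫ x in (0:ℝ)..(2 * Real.pi), gD v L t x

/-- The plain energy -/
noncomputable def EE (A : ℝ) (v L : ℝ → ℝ → ℝ) (t : ℝ) : ℝ :=
  meanVel v t ^ 2 + ∫ x in (0:ℝ)..(2 * Real.pi), eD A v L t x

/-- Weighted integral -/
noncomputable def IW (v L : ℝ → ℝ → ℝ) (t : ℝ) : ℝ :=
  ∫ x in (0:ℝ)..(2 * Real.pi), (1 - v t x ^ 2) ^ 2 * pderivX (pderivX L) t x ^ 2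

/-- Integral of a square -/
noncomputable def I2 (F : ℝ → ℝ → ℝ) (t : ℝ) : ℝ :=
  ∫ x in (0:ℝ)..(2 * Real.pi), F t x ^ 2

lemma I2_nonneg (F : ℝ → ℝ → ℝ) (t : ℝ) : 0 ≤ I2 F t :=
  intervalIntegral.integral_nonneg (by positivity) (fun x _ => sq_nonneg _)

lemma IW_nonneg (v L : ℝ → ℝ → ℝ) (t : ℝ) : 0 ≤ IW v L t :=
  intervalIntegral.integral_nonneg (by positivity) (fun x _ => by positivity)

section est3
variable {A : ℝ} {v L : ℝ → ℝ → ℝ} {t : ℝ}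

lemma EE_eq (hv : SmH v) (hL : SmH L) (ht : 1 ≤ t) : EE A v L t = meanVel v t ^ 2 + A * I2 (pderivX v) t + I2 (pderivX L) t
    + A * I2 (pderivX (pderivX v)) t + IW v L t := by
  have c0 := hv.cont ht
  have cp := hv.dX.cont ht
  have cV := hv.dX.dX.cont ht
  have cq := hL.dX.cont ht
  have cΛ := hL.dX.dX.cont ht
  unfold EE eD IW I2
  rw [intervalIntegral.integral_add, intervalIntegral.integral_add, intervalIntegral.integral_add,
    intervalIntegral.integral_const_mul, intervalIntegral.integral_const_mul]
  · ring
  all_goals exact Continuous.intervalIntegrable (by fun_prop) _ _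

lemma IR_eq (hv : SmH v) (hL : SmH L) (ht : 1 ≤ t) : ∫ x in (0:ℝ)..(2 * Real.pi), R2 v L t x = I2 v t + I2 (pderivX v) t + I2 (pderivX L) t
    + I2 (pderivX (pderivX v)) t + I2 (pderivX (pderivX L)) t := by
  have c0 := hv.cont ht
  have cp := hv.dX.cont ht
  have cV := hv.dX.dX.cont ht
  have cq := hL.dX.cont ht
  have cΛ := hL.dX.dX.cont ht
  unfold R2 I2
  rw [intervalIntegral.integral_add, intervalIntegral.integral_add, intervalIntegral.integral_add,
    intervalIntegral.integral_add]
  all_goals exact Continuous.intervalIntegrable (by fun_prop) _ _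

lemma IG_bd (hv : SmH v) (hL : SmH L) (ht : 1 ≤ t) : |∫ x in (0:ℝ)..(2 * Real.pi), gD v L t x| ≤
    I2 v t + I2 (pderivX L) t + I2 (pderivX (pderivX v)) t := by
  have c0 := hv.cont ht
  have cV := hv.dX.dX.cont ht
  have cq := hL.dX.cont ht
  have cg := (hv.gD hL).cont ht
  refine (intervalIntegral.abs_integral_le_integral_abs (by positivity)).trans ?_
  have e : ∫ x in (0:ℝ)..(2 * Real.pi), |gD v L t x| ≤ ∫ x in (0:ℝ)..(2 * Real.pi),
      (v t x ^ 2 + pderivX L t x ^ 2 + pderivX (pderivX v) t x ^ 2) := by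
    refine intervalIntegral.integral_mono_on (by positivity)
        (cg.abs.intervalIntegrable _ _) (Continuous.intervalIntegrable (by fun_prop) _ _) ?_
    intro x _
    unfold gD
    rw [abs_le]
    constructor <;> nlinarith [sq_nonneg (v t x - pderivX L t x), sq_nonneg (v t x + pderivX L t x),
      sq_nonneg (pderivX (pderivX v) t x - pderivX L t x),
      sq_nonneg (pderivX (pderivX v) t x + pderivX L t x), sq_nonneg (v t x),
      sq_nonneg (pderivX (pderivX v) t x), sq_nonneg (pderivX L t x)]
  refine e.trans (le_of_eq ?_)
  unfold I2
  rw [intervalIntegral.integral_add, intervalIntegral.integral_add]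
  all_goals exact Continuous.intervalIntegrable (by fun_prop) _ _

lemma sob_v (hv : SmH v) (ht : 1 ≤ t) (pv : ∀ t x, v t (x + 2 * Real.pi) = v t x) (x : ℝ) :
    v t x ^ 2 ≤ 2 * meanVel v t ^ 2 + 16 * I2 (pderivX v) t :=
  sobolev_aux (fun x => hv.hasDerivX ht x) (hv.dX.cont ht) (pv t) x

lemma sob_dX (hv : SmH v) (ht : 1 ≤ t) (pv : ∀ t x, v t (x + 2 * Real.pi) = v t x) (x : ℝ) :
    pderivX v t x ^ 2 ≤ 16 * I2 (pderivX (pderivX v)) t := by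
  have h := sobolev_aux (fun x => hv.dX.hasDerivX ht x) (hv.dX.dX.cont ht) (per_dX pv t) x
  have h0 : ∫ x in (0:ℝ)..(2 * Real.pi), pderivX v t x = 0 := by
    rw [intervalIntegral.integral_eq_sub_of_hasDerivAt (fun x _ => hv.hasDerivX ht x)
      ((hv.dX.cont ht).intervalIntegrable _ _), per_0 pv, sub_self]
  rw [h0] at h
  have : 16 * I2 (pderivX (pderivX v)) t = 2 * (0:ℝ) ^ 2
      + 16 * ∫ x in (0:ℝ)..(2 * Real.pi), pderivX (pderivX v) t x ^ 2 := by
    unfold I2; ring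
  rw [this]; exact h

lemma I2_v (hv : SmH v) (ht : 1 ≤ t) (pv : ∀ t x, v t (x + 2 * Real.pi) = v t x) :
    I2 v t ≤ 16 * meanVel v t ^ 2 + 128 * I2 (pderivX v) t := by
  have c0 := hv.cont ht
  have e : I2 v t ≤ ∫ x in (0:ℝ)..(2 * Real.pi), (2 * meanVel v t ^ 2 + 16 * I2 (pderivX v) t) := by
    refine intervalIntegral.integral_mono_on (by positivity)
        (Continuous.intervalIntegrable (by fun_prop) _ _) (by simp) ?_
    intro x _
    exact sob_v hv ht pv x
  rw [intervalIntegral.integral_const] at e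
  simp only [smul_eq_mul, sub_zero] at e
  have := Real.pi_le_four
  have h1 : 0 ≤ 2 * meanVel v t ^ 2 + 16 * I2 (pderivX v) t := by
    have := I2_nonneg (pderivX v) t
    positivity
  nlinarith

lemma IW_bd (hv : SmH v) (hL : SmH L) (ht : 1 ≤ t) (hu : ∀ x, |v t x| ≤ 1 / 2) :
    IW v L t ≤ I2 (pderivX (pderivX L)) t ∧ I2 (pderivX (pderivX L)) t ≤ 2 * IW v L t := by
  have c0 := hv.cont ht
  have cΛ := hL.dX.dX.cont ht
  unfold IW I2
  rw [← intervalIntegral.integral_const_mul]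
  constructor
  · refine intervalIntegral.integral_mono_on (by positivity)
        (Continuous.intervalIntegrable (by fun_prop) _ _)
        (Continuous.intervalIntegrable (by fun_prop) _ _) ?_
    intro x _
    have := (w_bounds le_rfl (hu x)).2.1
    nlinarith [sq_nonneg (pderivX (pderivX L) t x)]
  · refine intervalIntegral.integral_mono_on (by positivity)
        (Continuous.intervalIntegrable (by fun_prop) _ _)
        (Continuous.intervalIntegrable (by fun_prop) _ _) ?_
    intro x _
    have := (w_bounds le_rfl (hu x)).2.2.2
    nlinarith [sq_nonneg (pderivX (pderivX L) t x)]

lemma Phi_ge {α c M : ℝ} (hv : SmH v) (hL : SmH L) (ht : 1 ≤ t) (hα1 : α ≤ 1) (hA : 1 ≤ A) (hc : 0 ≤ c) (hM : M = 128 * c)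
    (pv : ∀ t x, v t (x + 2 * Real.pi) = v t x) :
    c * |∫ x in (0:ℝ)..(2 * Real.pi), gD v L t x| ≤ M * EE A v L t ∧
    EE A v L t ≤ Phi α c M A v L t ∧ Phi α c M A v L t ≤ (1 + 2 * M) * EE A v L t := by
  have h1 := IG_bd hv hL ht
  have h2 := I2_v hv ht pv
  have h3 := EE_eq (A := A) hv hL ht
  have n1 := I2_nonneg (pderivX v) t
  have n2 := I2_nonneg (pderivX L) t
  have n3 := I2_nonneg (pderivX (pderivX v)) t
  have n4 := IW_nonneg v L t
  have n5 := sq_nonneg (meanVel v t)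
  have a1 := mul_le_mul_of_nonneg_right hA n1
  have a2 := mul_le_mul_of_nonneg_right hA n3
  have h4 : |∫ x in (0:ℝ)..(2 * Real.pi), gD v L t x| ≤ 128 * EE A v L t := by linarith
  have h5 : c * |∫ x in (0:ℝ)..(2 * Real.pi), gD v L t x| ≤ M * EE A v L t := by
    rw [hM]
    have := mul_le_mul_of_nonneg_left h4 hc
    linarith
  have hE0 : 0 ≤ EE A v L t := by linarith
  refine ⟨h5, ?_⟩
  have hτ0 : 0 ≤ t ^ (α - 1) := by positivity
  have hτ1 : t ^ (α - 1) ≤ 1 := Real.rpow_le_one_of_one_le_of_nonpos ht (by linarith)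
  have e : Phi α c M A v L t = EE A v L t + t ^ (α - 1) * (M * EE A v L t
      + c * ∫ x in (0:ℝ)..(2 * Real.pi), gD v L t x) := by
    unfold Phi EE; ring
  have h6 := mul_le_mul_of_nonneg_left (neg_abs_le (∫ x in (0:ℝ)..(2 * Real.pi), gD v L t x)) hc
  have h7 := mul_le_mul_of_nonneg_left (le_abs_self (∫ x in (0:ℝ)..(2 * Real.pi), gD v L t x)) hc
  rw [e]
  constructor
  · have : 0 ≤ M * EE A v L t + c * ∫ x in (0:ℝ)..(2 * Real.pi), gD v L t x := by linarith
    have := mul_nonneg hτ0 this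
    linarith
  · have h8 : M * EE A v L t + c * (∫ x in (0:ℝ)..(2 * Real.pi), gD v L t x) ≤ 2 * (M * EE A v L t) := by
      linarith
    have h9 : 0 ≤ 2 * (M * EE A v L t) := by rw [hM]; positivity
    have := mul_le_mul hτ1 h8 (by linarith) zero_le_one
    linarith

end est3


set_option maxHeartbeats 1000000 in
lemma diff_alg {X P Q V Lm W IR G z1 E1 G1 E Φ : ℝ} {a A B K c M d T s τ θ α pi' t : ℝ}
    (hX : 0 ≤ X) (hP : 0 ≤ P) (hQ : 0 ≤ Q) (hV : 0 ≤ V) (hW : 0 ≤ W) (hWL : W ≤ Lm)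
    (hA : 1 ≤ A) (hB : 1 ≤ B) (hc : 0 ≤ c) (hM : 0 ≤ M) (hd : 0 ≤ d) (hT : 0 ≤ T) (hs : 0 ≤ s)
    (hτ0 : 0 ≤ τ) (hτ1 : τ ≤ 1) (hθ : 0 ≤ θ) (hα0 : 0 ≤ α) (hα1 : α ≤ 1) (ha1 : a ≤ 1)
    (hpi : pi' ≤ 4)
    (hd' : d = a / t) (hτT : τ * T = 1 / t) (hdτ : d * τ = a * θ)
    (hck : c * (K / (1 + K)) = a) (hcK : c * (1 + K) = a * A)
    (hE : E = X + A * P + Q + A * V + W) (hIR : IR ≤ 129 * E)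
    (hG : c * |G| ≤ M * E)
    (hΦ : Φ = (1 + M * τ) * E + c * τ * G)
    (hz1 : z1 ≤ -d * X + 14 * B * T * s * (IR + 2 * pi' * X))
    (hE1 : E1 ≤ -2 * d * A * (P + V) + 1000 * B ^ 2 * T * s * IR)
    (hG1 : G1 ≤ -d * G + T * ((1 + K) * (P + V) - K / (1 + K) * (Q + Lm))
      + 1000 * B ^ 2 * T * s * IR) :
    (1 + M * τ) * (2 * z1 + E1) + M * ((α - 1) * θ) * E + c * τ * G1 + c * ((α - 1) * θ) * G ≤
      -d * Φ + ((1 + M + c) * 133000 * B ^ 2 * (T * s) + 4 * M * θ) * Φ := by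
  have hAP : 0 ≤ A * P := by positivity
  have hAV : 0 ≤ A * V := by positivity
  have hE0 : 0 ≤ E := by linarith
  have hXE : X ≤ E := by linarith
  set S := B ^ 2 * (T * s) * E with hS
  have hS0 : 0 ≤ S := by positivity
  have hTs : 0 ≤ T * s := by positivity
  have hz2 : 14 * B * T * s * (IR + 2 * pi' * X) ≤ 2000 * S := by
    have h1 : 2 * pi' * X ≤ 8 * X := mul_le_mul_of_nonneg_right (by linarith) hX
    have h2 : IR + 2 * pi' * X ≤ 137 * E := by linarith
    have h3 : B * (T * s) * (IR + 2 * pi' * X) ≤ B * (T * s) * (137 * E) :=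
      mul_le_mul_of_nonneg_left h2 (by positivity)
    have h4 : B * (T * s * E) ≤ B ^ 2 * (T * s * E) :=
      mul_le_mul_of_nonneg_right (le_self_pow₀ hB (by norm_num)) (by positivity)
    have h5 : B ^ 2 * (T * s * E) = S := by rw [hS]; ring
    linarith
  have hR2 : 1000 * B ^ 2 * T * s * IR ≤ 129000 * S := by
    have h3 : B ^ 2 * (T * s) * IR ≤ B ^ 2 * (T * s) * (129 * E) :=
      mul_le_mul_of_nonneg_left hIR (by positivity)
    rw [hS]; linarith
  have hH : 2 * z1 + E1 ≤ -(2 * d * (X + A * P + A * V)) + 133000 * S := by linarith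
  have hY : 0 ≤ 2 * d * (X + A * P + A * V) := by positivity
  have hMτ : 0 ≤ M * τ := by positivity
  have hMτ1 : M * τ ≤ M := mul_le_of_le_one_right hM hτ1
  have k1 : (1 + M * τ) * (2 * z1 + E1) ≤
      -(2 * d * (X + A * P + A * V)) + (1 + M) * (133000 * S) := by
    have h1 := mul_le_mul_of_nonneg_left hH (by linarith : 0 ≤ 1 + M * τ)
    have h2 : 0 ≤ M * τ * (2 * d * (X + A * P + A * V)) := by positivity
    have h3 : M * τ * S ≤ M * S := mul_le_mul_of_nonneg_right hMτ1 hS0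
    linarith
  have k2 : c * τ * G1 ≤ -(d * τ) * (c * G) + d * (A * P + A * V - Q - Lm) + c * (129000 * S) := by
    have h1 := mul_le_mul_of_nonneg_left (hG1.trans (add_le_add_right hR2 _))
      (by positivity : 0 ≤ c * τ)
    have h2 : c * τ * S ≤ c * S := mul_le_mul_of_nonneg_right (mul_le_of_le_one_right hc hτ1) hS0
    have h3 : c * τ * (T * ((1 + K) * (P + V) - K / (1 + K) * (Q + Lm))) =
        d * (A * P + A * V - Q - Lm) := by
      calc _ = (τ * T) * ((c * (1 + K)) * (P + V) - (c * (K / (1 + K))) * (Q + Lm)) := by ring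
        _ = _ := by rw [hτT, hck, hcK, hd']; ring
    linarith
  have g1 : -(M * E) ≤ c * G := by
    have := mul_le_mul_of_nonneg_left (neg_abs_le G) hc
    linarith
  have g2 : c * G ≤ M * E := (mul_le_mul_of_nonneg_left (le_abs_self G) hc).trans hG
  have hME : 0 ≤ M * E := by positivity
  have hdτ0 : 0 ≤ d * τ := by positivity
  have hdτ1 : d * τ ≤ θ := by rw [hdτ]; exact mul_le_of_le_one_left hθ ha1
  have hdM : d * τ * (M * E) ≤ θ * (M * E) := mul_le_mul_of_nonneg_right hdτ1 hME
  have k3 : -(d * τ) * (c * G) ≤ θ * (M * E) := by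
    have := mul_le_mul_of_nonneg_left g1 hdτ0
    linarith
  have k4 : M * ((α - 1) * θ) * E ≤ 0 := by
    have : 0 ≤ (1 - α) * (θ * (M * E)) := mul_nonneg (by linarith) (by positivity)
    linarith
  have k5 : c * ((α - 1) * θ) * G ≤ θ * (M * E) := by
    have h1 : (1 - α) * θ * (-(c * G)) ≤ (1 - α) * θ * (M * E) :=
      mul_le_mul_of_nonneg_left (by linarith) (mul_nonneg (by linarith) hθ)
    have h2 : 0 ≤ α * (θ * (M * E)) := by positivity
    linarith
  have k6 : -d * E ≤ -d * Φ + 2 * (θ * (M * E)) := by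
    have h1 : Φ - E = τ * (M * E + c * G) := by rw [hΦ]; ring
    have h2 : Φ - E ≤ τ * (2 * (M * E)) := by
      rw [h1]; exact mul_le_mul_of_nonneg_left (by linarith) hτ0
    have := mul_le_mul_of_nonneg_left h2 hd
    linarith
  have hEΦ : E ≤ Φ := by
    have h1 : Φ - E = τ * (M * E + c * G) := by rw [hΦ]; ring
    have : 0 ≤ τ * (M * E + c * G) := mul_nonneg hτ0 (by linarith)
    linarith
  have k7 : d * W ≤ d * Lm := mul_le_mul_of_nonneg_left hWL hd
  have k8 : ((1 + M + c) * 133000 * B ^ 2 * (T * s) + 4 * M * θ) * E ≤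
      ((1 + M + c) * 133000 * B ^ 2 * (T * s) + 4 * M * θ) * Φ :=
    mul_le_mul_of_nonneg_left hEΦ (by positivity)
  have k9 : d * E = d * X + d * (A * P) + d * Q + d * (A * V) + d * W := by rw [hE]; ring
  have k10 : ((1 + M + c) * 133000 * B ^ 2 * (T * s) + 4 * M * θ) * E
      = (1 + M + c) * (133000 * S) + 4 * (θ * (M * E)) := by rw [hS]; ring
  have k11 : 0 ≤ d * X := by positivity
  have k12 : 0 ≤ c * S := by positivity
  linarith

lemma Phi_continuousOn {α c M A : ℝ} {v L : ℝ → ℝ → ℝ} (hv : SmH v) (hL : SmH L) :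
    ContinuousOn (Phi α c M A v L) (Set.Ici 1) := by
  have h1 := hv.continuousOn_integral 0 (2 * Real.pi)
  have h2 := (hv.eD hL A).continuousOn_integral 0 (2 * Real.pi)
  have h3 := (hv.gD hL).continuousOn_integral 0 (2 * Real.pi)
  have h4 : ContinuousOn (fun t : ℝ => t ^ (α - 1)) (Set.Ici 1) := by
    intro t ht
    have : (0:ℝ) < t := lt_of_lt_of_le one_pos ht
    exact (Real.continuousAt_rpow_const t _ (Or.inl this.ne')).continuousWithinAt
  exact ((continuousOn_const.add (continuousOn_const.mul h4)).mul ((h1.pow 2).add h2)).add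
    ((continuousOn_const.mul h4).mul h3)

lemma Phi_hasDerivAt {α c M A : ℝ} {v L : ℝ → ℝ → ℝ} (hv : SmH v) (hL : SmH L) {t : ℝ}
    (ht : 1 < t) :
    HasDerivAt (Phi α c M A v L)
      ((1 + M * t ^ (α - 1)) * (2 * (meanVel v t * ∫ x in (0:ℝ)..(2 * Real.pi), pderivT v t x)
          + ∫ x in (0:ℝ)..(2 * Real.pi), pderivT (eD A v L) t x)
        + M * ((α - 1) * t ^ (α - 2)) * EE A v L t
        + c * t ^ (α - 1) * (∫ x in (0:ℝ)..(2 * Real.pi), pderivT (gD v L) t x)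
        + c * ((α - 1) * t ^ (α - 2)) * ∫ x in (0:ℝ)..(2 * Real.pi), gD v L t x) t := by
  have h1 := hv.hasDerivAt_integral ht 0 (2 * Real.pi)
  have h2 := (hv.eD hL A).hasDerivAt_integral ht 0 (2 * Real.pi)
  have h3 := (hv.gD hL).hasDerivAt_integral ht 0 (2 * Real.pi)
  have h4 := Real.hasDerivAt_rpow_const (x := t) (p := α - 1) (Or.inl (by linarith))
  have h := (((h4.const_mul M).const_add 1).mul ((h1.pow 2).add h2)).add ((h4.const_mul c).mul h3)
  refine h.congr_deriv ?_
  rw [show α - 1 - 1 = α - 2 by ring]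
  simp only [Pi.add_apply, Pi.pow_apply, EE, meanVel]
  push_cast
  ring

section di
variable {α K a A B c M : ℝ} {m m1 m2 n n1 n2 r r1 r2 f f1 f2 g g1 g2 : ℝ → ℝ}
  {v L : ℝ → ℝ → ℝ} {t : ℝ}

lemma pt_bounds (hv : SmH v) (hL : SmH L) (hA : 1 ≤ A)
    (pv : ∀ t x, v t (x + 2 * Real.pi) = v t x) (pL : ∀ t x, L t (x + 2 * Real.pi) = L t x)
    (ht : 1 ≤ t) {Φ : ℝ} (hEΦ : EE A v L t ≤ Φ) (hs : 6 * √Φ ≤ 1 / 2) :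
    (∀ x, |v t x| ≤ 6 * √Φ) ∧ (∀ x, |pderivX v t x| ≤ 6 * √Φ) ∧
      (∀ x, |pderivX L t x| ≤ 6 * √Φ) := by
  have h3 := EE_eq (A := A) hv hL ht
  have n1 := I2_nonneg (pderivX v) t
  have n2 := I2_nonneg (pderivX L) t
  have n3 := I2_nonneg (pderivX (pderivX v)) t
  have n4 := IW_nonneg v L t
  have n5 := sq_nonneg (meanVel v t)
  have a1 := mul_le_mul_of_nonneg_right hA n1
  have a2 := mul_le_mul_of_nonneg_right hA n3
  have hΦ0 : 0 ≤ Φ := by linarith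
  have aux : ∀ y : ℝ, y ^ 2 ≤ 36 * Φ → |y| ≤ 6 * √Φ := by
    intro y hy
    refine abs_le_of_sq_le_sq (hy.trans (le_of_eq ?_)) (by positivity)
    rw [mul_pow, Real.sq_sqrt hΦ0]; norm_num
  have b1 : ∀ x, |v t x| ≤ 6 * √Φ := fun x => aux _ (by have := sob_v hv ht pv x; linarith)
  have b2 : ∀ x, |pderivX v t x| ≤ 6 * √Φ := fun x => aux _ (by have := sob_dX hv ht pv x; linarith)
  have b4 := (IW_bd hv hL ht (fun x => (b1 x).trans hs)).2
  exact ⟨b1, b2, fun x => aux _ (by have := sob_dX hL ht pL x; linarith)⟩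

lemma Phi_diff_ineq (hK0 : 0 < K) (hK3 : K < 1/3) (hα0 : 0 < α) (hα1 : α < 1)
    (ha : a = α * (1 - 3 * K)) (hA : A = (1 + K) ^ 2 / K)
    (hAB : A ≤ B) (hc : c = a / (K / (1 + K))) (hM : M = 128 * c)
    (C : Coefs a K B m m1 m2 n n1 n2 r r1 r2 f f1 f2 g g1 g2)
    (hsol : IsEulerSolution α K v L) (hv : SmH v) (hL : SmH L)
    (pv : ∀ t x, v t (x + 2 * Real.pi) = v t x) (pL : ∀ t x, L t (x + 2 * Real.pi) = L t x)
    (ht : 1 < t) (hs : 6 * √(Phi α c M A v L t) ≤ 1 / 2) :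
    deriv (Phi α c M A v L) t ≤ -(a / t) * Phi α c M A v L t
      + ((1 + M + c) * 133000 * B ^ 2 * (t ^ (-α) * (6 * √(Phi α c M A v L t)))
        + 4 * M * t ^ (α - 2)) * Phi α c M A v L t := by
  rw [(Phi_hasDerivAt hv hL ht).deriv]
  have ht0 : 0 < t := by linarith
  have hA1 : 1 ≤ A := by
    rw [hA, le_div_iff₀ hK0]; nlinarith
  have ha0 : 0 ≤ a := by rw [ha]; exact mul_nonneg hα0.le (by linarith)
  have ha1 : a ≤ 1 := by rw [ha]; nlinarith
  have hc0 : 0 ≤ c := by rw [hc]; positivity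
  have hM0 : 0 ≤ M := by rw [hM]; positivity
  obtain ⟨hG, hEΦ, -⟩ := Phi_ge (A := A) (α := α) hv hL ht.le hα1.le hA1 hc0 hM pv
  obtain ⟨b1, b2, b3⟩ := pt_bounds hv hL hA1 pv pL ht.le hEΦ hs
  set Φ := Phi α c M A v L t with hΦ
  have hs0 : 0 ≤ 6 * √Φ := by positivity
  obtain ⟨w1, w2⟩ := IW_bd hv hL ht.le (fun x => (b1 x).trans hs)
  have n1 := I2_nonneg (pderivX v) t
  have n2 := I2_nonneg (pderivX L) t
  have n3 := I2_nonneg (pderivX (pderivX v)) t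
  have n4 := IW_nonneg v L t
  have n5 := sq_nonneg (meanVel v t)
  have a1 := mul_le_mul_of_nonneg_right hA1 n1
  have a2 := mul_le_mul_of_nonneg_right hA1 n3
  have h3 := EE_eq (A := A) hv hL ht.le
  have h4 := IR_eq hv hL ht.le
  have h5 := I2_v hv ht.le pv
  have hinvT : 1 / t ≤ t ^ (-α) := by
    rw [one_div, ← Real.rpow_neg_one]
    exact Real.rpow_le_rpow_of_exponent_le ht.le (by linarith)
  have hdT : a / t ≤ t ^ (-α) := by
    refine le_trans ?_ hinvT
    gcongr
  refine diff_alg (X := meanVel v t ^ 2) (P := I2 (pderivX v) t) (Q := I2 (pderivX L) t)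
    (V := I2 (pderivX (pderivX v)) t) (Lm := I2 (pderivX (pderivX L)) t) (W := IW v L t)
    (IR := ∫ x in (0:ℝ)..(2 * Real.pi), R2 v L t x) (a := a) (K := K) (pi' := Real.pi) (t := t)
    n5 n1 n2 n3 n4 w1 hA1 C.B1 hc0 hM0 (by positivity) (by positivity) hs0 (by positivity)
    (Real.rpow_le_one_of_one_le_of_nonpos ht.le (by linarith)) (by positivity) hα0.le hα1.le ha1
    Real.pi_le_four rfl ?_ ?_ ?_ ?_ h3 (by linarith) hG (by rw [hΦ]; rfl)
    (mean_int hK0 ha C hsol hv hL pL ht hs0 hs b1)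
    (energy_int hK0 hK3 ha hA hAB C hsol hv hL pv pL ht (by positivity) hdT hs0 hs b1 b2 b3)
    (corr_int hK0 hK3 ha C hsol hv hL pv pL ht hs0 hs b1 b2 b3)
  · rw [← Real.rpow_add ht0, one_div, ← Real.rpow_neg_one]; congr 1; ring
  · rw [div_eq_mul_inv, ← Real.rpow_neg_one, mul_assoc, ← Real.rpow_add ht0]; congr 2; ring
  · rw [hc]; field_simp
  · rw [hc, hA]; field_simp
end di


lemma fence {α a C1 C2 : ℝ} (ha : 0 < a) (hα1 : α < 1) (hαa : 1 < α + a / 2) (hC1 : 0 ≤ C1)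
    (hC2 : 0 ≤ C2) :
    ∃ η > 0, ∀ Φ : ℝ → ℝ, ContinuousOn Φ (Set.Ici 1) → (∀ t, 1 < t → DifferentiableAt ℝ Φ t) →
      (∀ t, 1 < t → 6 * √(Φ t) ≤ 1 / 2 → deriv Φ t ≤ -(a / t) * Φ t
        + (C1 * (t ^ (-α) * (6 * √(Φ t))) + C2 * t ^ (α - 2)) * Φ t) →
      Φ 1 < η → ∀ t, 1 ≤ t → Φ t ≤ 1 / 144 * t ^ (-a) := by
  obtain ⟨β, hβ1, hβa, hβb⟩ : ∃ β : ℝ, 1 < β ∧ β ≤ α + a / 2 ∧ β ≤ 2 - α :=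
    ⟨min (α + a / 2) (2 - α), lt_min hαa (by linarith), min_le_left _ _, min_le_right _ _⟩
  set D := (6 * C1 + C2 + 1) / (β - 1) with hD
  have hD0 : 0 ≤ D := div_nonneg (by linarith) (by linarith)
  have hDβ : D * (β - 1) = 6 * C1 + C2 + 1 := by
    rw [hD]; exact div_mul_cancel₀ _ (by linarith)
  let b : ℝ → ℝ := fun t => 1 / 144 * (t ^ (-a) * Real.exp (-D * t ^ (1 - β)))
  have hbpos : ∀ t, 1 ≤ t → 0 < b t := by
    intro t ht
    have : 0 < t := by linarith
    positivity
  have hble : ∀ t, 1 ≤ t → b t ≤ 1 / 144 * t ^ (-a) := by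
    intro t ht
    have ht0 : 0 < t := by linarith
    have h1 : Real.exp (-D * t ^ (1 - β)) ≤ 1 := by
      rw [Real.exp_le_one_iff]
      have : 0 ≤ D * t ^ (1 - β) := by positivity
      linarith
    have := mul_le_of_le_one_right (by positivity : 0 ≤ t ^ (-a)) h1
    simp only [b]; linarith
  have hbder : ∀ t, 1 ≤ t → HasDerivAt b (-(a / t) * b t + D * (β - 1) * t ^ (-β) * b t) t := by
    intro t ht
    have ht0 : 0 < t := by linarith
    have h1 := Real.hasDerivAt_rpow_const (x := t) (p := -a) (Or.inl ht0.ne')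
    have h2 := (Real.hasDerivAt_rpow_const (x := t) (p := 1 - β) (Or.inl ht0.ne')).const_mul (-D)
    have h3 := (h1.mul h2.exp).const_mul (1 / 144)
    refine h3.congr_deriv ?_
    rw [Real.rpow_sub_one ht0.ne', show 1 - β - 1 = -β by ring]
    simp only [b]
    ring
  refine ⟨b 1, hbpos 1 le_rfl, ?_⟩
  intro Φ hΦc hΦd hΦi hΦ1 t ht
  refine le_trans ?_ (hble t ht)
  rcases eq_or_lt_of_le ht with h | ht1
  · rw [← h]; exact hΦ1.le
  obtain ⟨t0, h0, h01, h0t⟩ : ∃ t0, Φ t0 < b t0 ∧ 1 < t0 ∧ t0 < t := by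
    have e1 : ∀ᶠ s in nhdsWithin (1:ℝ) (Set.Ioi 1), Φ s < b s := by
      have c1 : Filter.Tendsto Φ (nhdsWithin (1:ℝ) (Set.Ioi 1)) (nhds (Φ 1)) :=
        (hΦc 1 Set.self_mem_Ici).mono_left (nhdsWithin_mono _ Set.Ioi_subset_Ici_self)
      have c2 : Filter.Tendsto b (nhdsWithin (1:ℝ) (Set.Ioi 1)) (nhds (b 1)) :=
        (hbder 1 le_rfl).continuousAt.tendsto.mono_left nhdsWithin_le_nhds
      exact c1.eventually_lt c2 hΦ1
    obtain ⟨s, hs1, hs2⟩ := (e1.and (Ioo_mem_nhdsGT ht1)).exists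
    exact ⟨s, hs1, hs2.1, hs2.2⟩
  refine image_le_of_deriv_right_lt_deriv_boundary' (f := Φ) (f' := deriv Φ) (a := t0) (b := t)
    (hΦc.mono fun s hs => h01.le.trans hs.1)
    (fun s hs => (hΦd s (h01.trans_le hs.1)).hasDerivAt.hasDerivWithinAt) h0.le
    (fun s hs => (hbder s (h01.le.trans hs.1)).continuousAt.continuousWithinAt)
    (fun s hs => (hbder s (h01.le.trans hs.1)).hasDerivWithinAt) ?_ (Set.right_mem_Icc.2 h0t.le)
  intro s hs he
  have hs1 : 1 < s := h01.trans_le hs.1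
  have hs0 : 0 < s := by linarith
  have hb0 := hbpos s hs1.le
  have hb1 := hble s hs1.le
  have hsq : √(Φ s) ≤ 1 / 12 * s ^ (-a / 2) := by
    rw [he]
    refine Real.sqrt_le_iff.2 ⟨by positivity, hb1.trans (le_of_eq ?_)⟩
    rw [mul_pow, ← Real.rpow_natCast (s ^ (-a / 2)), ← Real.rpow_mul hs0.le]
    norm_num
  have hle1 : s ^ (-a / 2) ≤ 1 := Real.rpow_le_one_of_one_le_of_nonpos hs1.le (by linarith)
  have hi := hΦi s hs1 (by linarith)
  have hT : s ^ (-α) * (6 * √(Φ s)) ≤ s ^ (-β) := by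
    calc s ^ (-α) * (6 * √(Φ s)) ≤ s ^ (-α) * s ^ (-a / 2) := by
          refine mul_le_mul_of_nonneg_left ?_ (by positivity)
          have : 0 ≤ s ^ (-a / 2) := by positivity
          linarith
      _ = s ^ (-α + -a / 2) := (Real.rpow_add hs0 _ _).symm
      _ ≤ _ := Real.rpow_le_rpow_of_exponent_le hs1.le (by linarith)
  have hθ : s ^ (α - 2) ≤ s ^ (-β) := Real.rpow_le_rpow_of_exponent_le hs1.le (by linarith)
  have hβ0 : 0 < s ^ (-β) := by positivity
  rw [he] at hi
  rw [he] at hT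
  have hq : C1 * (s ^ (-α) * (6 * √(b s))) + C2 * s ^ (α - 2) < D * (β - 1) * s ^ (-β) := by
    have q1 := mul_le_mul_of_nonneg_left hT hC1
    have q2 := mul_le_mul_of_nonneg_left hθ hC2
    rw [hDβ]
    have q3 : 0 ≤ C1 * s ^ (-β) := by positivity
    linarith
  have := mul_lt_mul_of_pos_right hq hb0
  linarith

lemma norm_eq (v L : ℝ → ℝ → ℝ) (t : ℝ) : sobolevNorm2 v L t = √(I2 (pderivX v) t)
    + √(I2 (pderivX (pderivX v)) t) + √(I2 (pderivX L) t) + √(I2 (pderivX (pderivX L)) t) := rfl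

lemma init_bound {A : ℝ} {v L : ℝ → ℝ → ℝ} (hv : SmH v) (hL : SmH L) (hA : 1 ≤ A)
    (pv : ∀ t x, v t (x + 2 * Real.pi) = v t x)
    (h : |meanVel v 1| + sobolevNorm2 v L 1 < 1 / 9) :
    EE A v L 1 ≤ (3 + 2 * A) * (|meanVel v 1| + sobolevNorm2 v L 1) := by
  have h3 := EE_eq (A := A) hv hL le_rfl
  have n1 := I2_nonneg (pderivX v) 1
  have n2 := I2_nonneg (pderivX L) 1
  have n3 := I2_nonneg (pderivX (pderivX v)) 1
  have n4 := I2_nonneg (pderivX (pderivX L)) 1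
  rw [norm_eq] at h ⊢
  have s1 := Real.sqrt_nonneg (I2 (pderivX v) 1)
  have s2 := Real.sqrt_nonneg (I2 (pderivX L) 1)
  have s3 := Real.sqrt_nonneg (I2 (pderivX (pderivX v)) 1)
  have s4 := Real.sqrt_nonneg (I2 (pderivX (pderivX L)) 1)
  have s5 := abs_nonneg (meanVel v 1)
  set N := |meanVel v 1| + (√(I2 (pderivX v) 1)
    + √(I2 (pderivX (pderivX v)) 1) + √(I2 (pderivX L) 1) + √(I2 (pderivX (pderivX L)) 1)) with hN
  have hN0 : 0 ≤ N := by positivity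
  have hNN : N ^ 2 ≤ N := by nlinarith
  have hN2 : N ^ 2 ≤ 1 / 81 := by nlinarith
  have aux : ∀ y, 0 ≤ y → √y ≤ N → y ≤ N ^ 2 := by
    intro y hy hyN
    exact (Real.sqrt_le_left hN0).1 hyN
  have b1 := aux _ n1 (by linarith)
  have b2 := aux _ n2 (by linarith)
  have b3 := aux _ n3 (by linarith)
  have b4 := aux _ n4 (by linarith)
  have b5 : meanVel v 1 ^ 2 ≤ N ^ 2 := by
    rw [← sq_abs]; exact pow_le_pow_left₀ s5 (by linarith) 2
  have hu : ∀ x, |v 1 x| ≤ 1 / 2 := by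
    intro x
    refine abs_le_of_sq_le_sq ?_ (by norm_num)
    have := sob_v hv le_rfl pv x
    linarith
  have b6 := (IW_bd hv hL le_rfl hu).1
  have c1 := mul_le_mul_of_nonneg_left (b1.trans hNN) (by linarith : 0 ≤ A)
  have c2 := mul_le_mul_of_nonneg_left (b3.trans hNN) (by linarith : 0 ≤ A)
  linarith

lemma final_bound {A Φ a t : ℝ} {v L : ℝ → ℝ → ℝ} (hv : SmH v) (hL : SmH L) (hA : 1 ≤ A)
    (ha : 0 ≤ a)
    (pv : ∀ t x, v t (x + 2 * Real.pi) = v t x) (pL : ∀ t x, L t (x + 2 * Real.pi) = L t x)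
    (ht : 1 ≤ t) (hE : EE A v L t ≤ Φ) (hΦ : Φ ≤ 1 / 144 * t ^ (-a)) :
    sobolevNorm2 v L t ≤ 8 * t ^ (-a / 2) := by
  have ht0 : 0 < t := by linarith
  have hr : √(t ^ (-a)) = t ^ (-a / 2) := by
    rw [Real.sqrt_eq_rpow, ← Real.rpow_mul ht0.le]; congr 1; ring
  have hle1 : t ^ (-a) ≤ 1 := Real.rpow_le_one_of_one_le_of_nonpos ht (by linarith)
  have hsq : 6 * √Φ ≤ 1 / 2 := by
    have : √Φ ≤ 1 / 12 := Real.sqrt_le_iff.2 ⟨by norm_num, by linarith⟩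
    linarith
  obtain ⟨b1, -, -⟩ := pt_bounds hv hL hA pv pL ht hE hsq
  have b4 := (IW_bd hv hL ht (fun x => (b1 x).trans hsq)).2
  have h3 := EE_eq (A := A) hv hL ht
  have n1 := I2_nonneg (pderivX v) t
  have n2 := I2_nonneg (pderivX L) t
  have n3 := I2_nonneg (pderivX (pderivX v)) t
  have n4 := IW_nonneg v L t
  have n5 := sq_nonneg (meanVel v t)
  have a1 := mul_le_mul_of_nonneg_right hA n1
  have a2 := mul_le_mul_of_nonneg_right hA n3
  have n6 : 0 ≤ t ^ (-a) := by positivity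
  rw [norm_eq]
  have e1 : √(I2 (pderivX v) t) ≤ √(t ^ (-a)) := Real.sqrt_le_sqrt (by linarith)
  have e2 : √(I2 (pderivX L) t) ≤ √(t ^ (-a)) := Real.sqrt_le_sqrt (by linarith)
  have e3 : √(I2 (pderivX (pderivX v)) t) ≤ √(t ^ (-a)) := Real.sqrt_le_sqrt (by linarith)
  have e4 : √(I2 (pderivX (pderivX L)) t) ≤ √(t ^ (-a)) := Real.sqrt_le_sqrt (by linarith)
  rw [hr] at e1 e2 e3 e4
  have n7 : 0 ≤ t ^ (-a / 2) := by positivity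
  linarith

/-- In the stable regime `(1−K)α > 2/3`, `0 < K < 1/3`, small perturbations of the quiet
fluid decay in the second-order Sobolev norm at the rate `t^(−α(1−3K)/2+δ)`. -/
theorem stability_decay_sobolev
    (α K : ℝ) (hK0 : 0 < K) (hK3 : K < 1 / 3) (hα0 : 0 < α) (hα1 : α < 1)
    (hstab : (1 - K) * α > 2 / 3) (δ : ℝ) (hδ : 0 < δ) :
    ∃ ε > 0, ∃ C > 0, ∀ v L : ℝ → ℝ → ℝ,
      ContDiffOn ℝ (⊤ : ℕ∞) (fun p : ℝ × ℝ => v p.1 p.2) (Set.Ici 1 ×ˢ Set.univ) →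
      ContDiffOn ℝ (⊤ : ℕ∞) (fun p : ℝ × ℝ => L p.1 p.2) (Set.Ici 1 ×ˢ Set.univ) →
      (∀ t x, v t (x + 2 * Real.pi) = v t x) →
      (∀ t x, L t (x + 2 * Real.pi) = L t x) →
      IsEulerSolution α K v L →
      |meanVel v 1| + sobolevNorm2 v L 1 < ε →
      ∀ t, 1 ≤ t → sobolevNorm2 v L t ≤ C * t ^ (-(α * (1 - 3 * K)) / 2 + δ) := by
  obtain ⟨a, ha⟩ : ∃ a, a = α * (1 - 3 * K) := ⟨_, rfl⟩
  obtain ⟨A, hA⟩ : ∃ A, A = (1 + K) ^ 2 / K := ⟨_, rfl⟩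
  obtain ⟨c, hc⟩ : ∃ c, c = a / (K / (1 + K)) := ⟨_, rfl⟩
  obtain ⟨M, hM⟩ : ∃ M, M = 128 * c := ⟨_, rfl⟩
  obtain ⟨B, m, m1, m2, n, n1, n2, r, r1, r2, f, f1, f2, g, g1, g2, hAB, C⟩ :=
    coefs_exist a K hK0 hK3 A
  have ha0 : 0 < a := by rw [ha]; exact mul_pos hα0 (by linarith)
  have hA1 : 1 ≤ A := by rw [hA, le_div_iff₀ hK0]; nlinarith
  have hc0 : 0 ≤ c := by rw [hc]; positivity
  have hM0 : 0 ≤ M := by rw [hM]; positivity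
  obtain ⟨η, hη, hf⟩ := fence (α := α) (a := a) (C1 := (1 + M + c) * 133000 * B ^ 2) (C2 := 4 * M)
    ha0 hα1 (by rw [ha]; nlinarith) (by positivity) (by positivity)
  have hQ : 0 < (1 + 2 * M) * (3 + 2 * A) := by positivity
  refine ⟨min (1 / 9) (η / ((1 + 2 * M) * (3 + 2 * A))), lt_min (by norm_num) (by positivity),
    8, by norm_num, ?_⟩
  intro v L hv hL pv pL hsol hini t ht
  have hv : SmH v := hv
  have hL : SmH L := hL
  have hE1 := init_bound hv hL hA1 pv (hini.trans_le (min_le_left _ _))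
  have hP1 := (Phi_ge (A := A) (α := α) hv hL le_rfl hα1.le hA1 hc0 hM pv).2.2
  have hini2 := hini.trans_le (min_le_right _ _)
  rw [lt_div_iff₀ hQ] at hini2
  have hΦ1 : Phi α c M A v L 1 < η := by
    have := mul_le_mul_of_nonneg_left hE1 (by linarith : 0 ≤ 1 + 2 * M)
    linarith
  have hΦ := hf (Phi α c M A v L) (Phi_continuousOn hv hL)
    (fun t ht => (Phi_hasDerivAt hv hL ht).differentiableAt)
    (fun t ht hs => Phi_diff_ineq hK0 hK3 hα0 hα1 ha hA hAB hc hM C hsol hv hL pv pL ht hs)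
    hΦ1 t ht
  have hE := (Phi_ge (A := A) (α := α) hv hL ht hα1.le hA1 hc0 hM pv).2.1
  have hfin := final_bound hv hL hA1 ha0.le pv pL ht hE hΦ
  refine hfin.trans ?_
  rw [← ha]
  exact mul_le_mul_of_nonneg_left (Real.rpow_le_rpow_of_exponent_le ht (by linarith)) (by norm_num)
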